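/- Let Ω ⊂ ℂ be a bounded domain containing 0 whose boundary is an analytic Jordan curve, let u be a negative continuous subharmonic exhaustion of Ω with finite Monge–Ampère mass, and let 1 ≤ p < ∞ and f ∈ H^p_u(Ω) with f ≢ 0. Then there exist an Ω-inner function I and a zero-free function h ∈ H^2_u(Ω) such that f = I·h^{2/p}. In particular, every f ∈ H^1_u(Ω) can be written as a product f = g·h with both g, h ∈ H^2_u(Ω). -/

import Mathlib

open MeasureTheory Filter Metric Complex Set
open scoped Real ENNReal Topology

noncomputable section

/-- The Laplacian of a real-valued function on `ℂ ≅ ℝ²`. -/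
def lap (φ : ℂ → ℝ) (z : ℂ) : ℝ :=
  fderiv ℝ (fun w => fderiv ℝ φ w 1) z 1 +
    fderiv ℝ (fun w => fderiv ℝ φ w Complex.I) z Complex.I

/-- `h` is harmonic on `s`. -/
def HarmonicOn (h : ℂ → ℝ) (s : Set ℂ) : Prop :=
  ContDiffOn ℝ 2 h s ∧ ∀ z ∈ s, lap h z = 0

/-- `u` is subharmonic on `s` (continuous with the sub-mean-value property). -/
def SubharmonicOn (u : ℂ → ℝ) (s : Set ℂ) : Prop :=
  ContinuousOn u s ∧ ∀ z ∈ s, ∀ r : ℝ, 0 < r → closedBall z r ⊆ s →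
    u z ≤ (2 * Real.pi)⁻¹ *
      ∫ t in (0:ℝ)..(2 * Real.pi), u (z + (r : ℂ) * Complex.exp ((t : ℂ) * Complex.I))

/-- `u` is a negative continuous subharmonic exhaustion function for `Ω`:
sublevel sets `{u < c}`, `c < 0`, are relatively compact in `Ω`. -/
structure IsExhaustion (u : ℂ → ℝ) (Ω : Set ℂ) : Prop where
  neg : ∀ z ∈ Ω, u z < 0
  subh : SubharmonicOn u Ω
  exh : ∀ c : ℝ, c < 0 → IsCompact (closure {z | z ∈ Ω ∧ u z < c}) ∧
    closure {z | z ∈ Ω ∧ u z < c} ⊆ Ω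

/-- `ν` is the Riesz measure `dd^c u = (1/4) Δu dA` of `u` on `Ω`, characterized
distributionally: `∫ φ dν = (1/4) ∫_Ω u Δφ dA` for test functions `φ`. -/
def IsRieszMeasure (u : ℂ → ℝ) (Ω : Set ℂ) (ν : Measure ℂ) : Prop :=
  ν Ωᶜ = 0 ∧
  ∀ φ : ℂ → ℝ, ContDiff ℝ 2 φ → HasCompactSupport φ → tsupport φ ⊆ Ω →
    ∫ z, φ z ∂ν = (4 : ℝ)⁻¹ * ∫ z in Ω, u z * lap φ z

/-- `μ` is the Monge–Ampère measure `μ_{u,r} = dd^c max(u,r) - χ_{Ω∖{u<r}} dd^c u`,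
where `ν = dd^c u`. -/
def IsMAMeasure (u : ℂ → ℝ) (Ω : Set ℂ) (ν : Measure ℂ) (r : ℝ) (μ : Measure ℂ) : Prop :=
  ∃ νr : Measure ℂ, IsRieszMeasure (fun z => max (u z) r) Ω νr ∧
    μ = νr - ν.restrict {z | z ∈ Ω ∧ r ≤ u z}

/-- The `p`-th power of the Poletsky–Stessin Hardy "norm",
`limsup_{r→0⁻} ∫ |f|^p dμ_{u,r}`. -/
def psNormPow (p : ℝ) (μfam : ℝ → Measure ℂ) (f : ℂ → ℂ) : ℝ≥0∞ :=
  Filter.limsup (fun r => ∫⁻ z, ENNReal.ofReal (‖f z‖ ^ p) ∂(μfam r))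
    (nhdsWithin 0 (Set.Iio 0))

/-- The Poletsky–Stessin Hardy norm. -/
def psNorm (p : ℝ) (μfam : ℝ → Measure ℂ) (f : ℂ → ℂ) : ℝ≥0∞ :=
  psNormPow p μfam f ^ (1 / p)

/-- Membership in the Poletsky–Stessin Hardy space `H^p_u(Ω)`, where `μfam r = μ_{u,r}`. -/
def MemPS (p : ℝ) (Ω : Set ℂ) (μfam : ℝ → Measure ℂ) (f : ℂ → ℂ) : Prop :=
  DifferentiableOn ℂ f Ω ∧ psNormPow p μfam f < ⊤

/-- Membership in the classical Hardy space `H^p(Ω)`: `|f|^p` has a harmonic majorant. -/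
def MemHClassical (p : ℝ) (Ω : Set ℂ) (f : ℂ → ℂ) : Prop :=
  DifferentiableOn ℂ f Ω ∧
    ∃ h : ℂ → ℝ, HarmonicOn h Ω ∧ ∀ z ∈ Ω, ‖f z‖ ^ p ≤ h z

/-- A bounded domain in `ℂ` containing `0` whose boundary is an analytic Jordan curve:
there is a conformal map of the unit disc onto `Ω` extending analytically and injectively
across the closed disc, carrying the unit circle onto the boundary of `Ω`. -/
structure AnalyticJordanDomain (Ω : Set ℂ) : Prop where
  isOpen : IsOpen Ω
  isConnected : IsConnected Ω
  isBounded : Bornology.IsBounded Ω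
  zero_mem : (0:ℂ) ∈ Ω
  analyticBoundary : ∃ (U : Set ℂ) (ψ : ℂ → ℂ), IsOpen U ∧ closedBall (0:ℂ) 1 ⊆ U ∧
    DifferentiableOn ℂ ψ U ∧ Set.InjOn ψ U ∧ ψ '' ball (0:ℂ) 1 = Ω ∧
    ψ '' sphere (0:ℂ) 1 = frontier Ω

/-- `μ` is the boundary Monge–Ampère measure: the weak* limit of the measures
`μfam r = μ_{u,r}` as `r → 0⁻`. -/
def IsBoundaryMA (μfam : ℝ → Measure ℂ) (μ : Measure ℂ) : Prop :=
  ∀ φ : ℂ → ℝ, Continuous φ →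
    Filter.Tendsto (fun r => ∫ z, φ z ∂(μfam r)) (nhdsWithin 0 (Set.Iio 0))
      (nhds (∫ z, φ z ∂μ))

/-- `f` has nontangential limit `L` at the boundary point `ξ` of `Ω`. -/
def NTLim (Ω : Set ℂ) (f : ℂ → ℂ) (ξ : ℂ) (L : ℂ) : Prop :=
  ∀ C : ℝ, 1 < C →
    Filter.Tendsto f
      (nhdsWithin ξ {z | z ∈ Ω ∧ dist z ξ ≤ C * infDist z (frontier Ω)}) (nhds L)

/-- Arc length measure on the boundary of `Ω` (1-dimensional Hausdorff measure). -/
def arcLen (Ω : Set ℂ) : Measure ℂ := (μH[1] : Measure ℂ).restrict (frontier Ω)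

/-- `ψ` is a conformal map of the unit disc onto `Ω` with `ψ 0 = 0`. -/
def IsConformalOnto (ψ : ℂ → ℂ) (Ω : Set ℂ) : Prop :=
  DifferentiableOn ℂ ψ (ball (0:ℂ) 1) ∧ Set.InjOn ψ (ball (0:ℂ) 1) ∧
    ψ '' ball (0:ℂ) 1 = Ω ∧ ψ 0 = 0

/-- `h` is `Ω`-inner: `h ∘ ψ` has unimodular nontangential boundary values a.e. on the
unit circle. -/
def OmegaInner (Ω : Set ℂ) (ψ : ℂ → ℂ) (h : ℂ → ℂ) : Prop :=
  DifferentiableOn ℂ h Ω ∧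
    ∀ᵐ ξ ∂(arcLen (ball (0:ℂ) 1)), ∃ L : ℂ,
      NTLim (ball (0:ℂ) 1) (h ∘ ψ) ξ L ∧ ‖L‖ = 1

/-- `h` is `Ω`-outer: `h ∘ ψ` is outer, i.e.
`log|h(ψ 0)| = ∫_{∂𝔻} log|(h∘ψ)*| dσ` with `σ` normalized arc length. -/
def OmegaOuter (Ω : Set ℂ) (ψ : ℂ → ℂ) (h : ℂ → ℂ) : Prop :=
  DifferentiableOn ℂ h Ω ∧
    ∃ b : ℂ → ℂ,
      (∀ᵐ ξ ∂(arcLen (ball (0:ℂ) 1)), NTLim (ball (0:ℂ) 1) (h ∘ ψ) ξ (b ξ)) ∧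
      Real.log ‖h (ψ 0)‖ =
        (2 * Real.pi)⁻¹ * ∫ ξ, Real.log ‖b ξ‖ ∂(arcLen (ball (0:ℂ) 1))

/-!
Pull `f` back to the disc and divide out the zeros of `f ∘ ψ` one at a time by Blaschke factors. A
finite product of these has modulus at least `1 / 2` off a compact set, and the measures `μ_{u,r}`
leave every compact set as `r → 0` while the integrals of `|f|^p` against them increase with `r`. So
every quotient has Poletsky–Stessin norm at most `2 ^ p` times that of `f`, and in particular is
bounded somewhere on a fixed compact set, which forces `∑ (1 - ‖aₙ‖) < ∞`. The quotients converge to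
a zero-free function, whose norm is finite by Fatou's lemma and which is an exponential because the
disc is simply connected. The Blaschke product that was divided out has boundary values of modulus
one by Fatou's theorem on nontangential limits.
-/

open Real (circleAverage)
open scoped ComplexConjugate

/-! ### Test functions -/

section Laplacian

lemma lap_congr {f g : ℂ → ℝ} {z : ℂ} (h : f =ᶠ[𝓝 z] g) : lap f z = lap g z := by
  have hdir (v : ℂ) : (fun w => fderiv ℝ f w v) =ᶠ[𝓝 z] (fun w => fderiv ℝ g w v) := by
    filter_upwards [h.fderiv (𝕜 := ℝ)] with w hw
    rw [hw]
  rw [lap, lap, (hdir 1).fderiv_eq, (hdir Complex.I).fderiv_eq]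

lemma lap_eq_zero_of_notMem_tsupport {φ : ℂ → ℝ} {z : ℂ} (h : z ∉ tsupport φ) : lap φ z = 0 := by
  rw [lap_congr (notMem_tsupport_iff_eventuallyEq.mp h)]
  simp [lap]

lemma contDiff_fderiv_apply {φ : ℂ → ℝ} (hφ : ContDiff ℝ 2 φ) (v : ℂ) :
    ContDiff ℝ 1 (fun w => fderiv ℝ φ w v) :=
  (hφ.fderiv_right (m := 1) (by norm_num)).clm_apply contDiff_const

lemma continuous_fderiv_fderiv_apply {φ : ℂ → ℝ} (hφ : ContDiff ℝ 2 φ) (v : ℂ) :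
    Continuous fun z => fderiv ℝ (fun w => fderiv ℝ φ w v) z v :=
  ((contDiff_fderiv_apply hφ v).continuous_fderiv (by norm_num)).clm_apply continuous_const

lemma continuous_lap {φ : ℂ → ℝ} (hφ : ContDiff ℝ 2 φ) : Continuous (lap φ) :=
  (continuous_fderiv_fderiv_apply hφ 1).add (continuous_fderiv_fderiv_apply hφ Complex.I)

lemma integral_fderiv_apply_eq_zero {g : ℂ → ℝ} (hg : ContDiff ℝ 1 g) (hc : HasCompactSupport g)
    (v : ℂ) : ∫ z, fderiv ℝ g z v = 0 := by
  have hcont : Continuous fun z => fderiv ℝ g z v :=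
    (hg.continuous_fderiv (by norm_num)).clm_apply continuous_const
  have hparts := integral_mul_fderiv_eq_neg_fderiv_mul_of_integrable (μ := (volume : Measure ℂ))
    (f := fun _ : ℂ => (1 : ℝ)) (g := g) (v := v) (by simp)
    (by simpa using hcont.integrable_of_hasCompactSupport (hc.fderiv_apply ℝ v))
    (by simpa using hg.continuous.integrable_of_hasCompactSupport hc)
    (by simp) (fun x _ => hg.differentiable (by norm_num) x)
  simpa using hparts

lemma integral_lap_eq_zero {φ : ℂ → ℝ} (hφ : ContDiff ℝ 2 φ) (hc : HasCompactSupport φ) :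
    ∫ z, lap φ z = 0 := by
  have hint (v : ℂ) : Integrable fun z => fderiv ℝ (fun w => fderiv ℝ φ w v) z v :=
    (continuous_fderiv_fderiv_apply hφ v).integrable_of_hasCompactSupport
      ((hc.fderiv_apply ℝ v).fderiv_apply ℝ v)
  have hzero (v : ℂ) : ∫ z, fderiv ℝ (fun w => fderiv ℝ φ w v) z v = 0 :=
    integral_fderiv_apply_eq_zero (contDiff_fderiv_apply hφ v) (hc.fderiv_apply ℝ v) v
  simp only [lap]
  rw [integral_add (hint 1) (hint Complex.I), hzero, hzero, add_zero]

lemma integrableOn_mul_lap {Ω : Set ℂ} {w φ : ℂ → ℝ} (hw : ContinuousOn w Ω)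
    (hφ : ContDiff ℝ 2 φ) (hc : HasCompactSupport φ) (hs : tsupport φ ⊆ Ω) :
    IntegrableOn (fun z => w z * lap φ z) Ω := by
  have hon : IntegrableOn (fun z => w z * lap φ z) (tsupport φ) :=
    ((hw.mono hs).mul (continuous_lap hφ).continuousOn).integrableOn_compact hc
  refine ((integrableOn_iff_integrable_of_support_subset fun z hz => ?_).mp hon).integrableOn
  contrapose! hz
  simp [lap_eq_zero_of_notMem_tsupport hz]

/-- The function `(|φ|² + ε)^q`. For `ε > 0` it is a smooth subharmonic regularization of
`|φ|^(2q)`, to which the definition of a Riesz measure applies after a cutoff. -/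
def regPow (φ : ℂ → ℂ) (ε q : ℝ) (z : ℂ) : ℝ := (‖φ z‖ ^ 2 + ε) ^ q

lemma regPow_nonneg (φ : ℂ → ℂ) {ε : ℝ} (hε : 0 ≤ ε) (q : ℝ) (z : ℂ) : 0 ≤ regPow φ ε q z :=
  Real.rpow_nonneg (by positivity) q

lemma regPow_mono (φ : ℂ → ℂ) {ε δ q : ℝ} (hε : 0 ≤ ε) (hεδ : ε ≤ δ) (hq : 0 ≤ q) (z : ℂ) :
    regPow φ ε q z ≤ regPow φ δ q z :=
  Real.rpow_le_rpow (by positivity) (by linarith) hq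

lemma regPow_zero_half (φ : ℂ → ℂ) (p : ℝ) (z : ℂ) : regPow φ 0 (p / 2) z = ‖φ z‖ ^ p := by
  rw [regPow, add_zero, ← Real.rpow_natCast, ← Real.rpow_mul (norm_nonneg _)]
  congr 1
  push_cast
  ring

variable {Ω : Set ℂ} {φ : ℂ → ℂ} {ε q : ℝ} {z : ℂ}

lemma contDiffOn_regPow (hΩ : IsOpen Ω) (hφ : DifferentiableOn ℂ φ Ω) (hε : 0 < ε) (q : ℝ) :
    ContDiffOn ℝ 2 (regPow φ ε q) Ω := by
  have hφ2 : ContDiffOn ℝ 2 φ Ω := (hφ.contDiffOn hΩ).restrict_scalars ℝ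
  exact ((hφ2.norm_sq ℝ).add contDiffOn_const).rpow_const_of_ne fun z _ => by positivity

lemma hasFDerivAt_real_of_differentiableAt (h : DifferentiableAt ℂ φ z) :
    HasFDerivAt φ ((ContinuousLinearMap.toSpanSingleton ℂ (deriv φ z)).restrictScalars ℝ) z :=
  h.hasDerivAt.hasFDerivAt.restrictScalars ℝ

lemma fderiv_regPow_apply (h : DifferentiableAt ℂ φ z) (hε : 0 < ε) (q : ℝ) (v : ℂ) :
    fderiv ℝ (regPow φ ε q) z v
      = q * (‖φ z‖ ^ 2 + ε) ^ (q - 1) * (2 * inner ℝ (φ z) (v * deriv φ z)) := by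
  have hbase := ((hasFDerivAt_real_of_differentiableAt h).norm_sq).add_const ε
  have hpow : HasFDerivAt (regPow φ ε q) _ z :=
    hbase.rpow_const (p := q) (Or.inl (by positivity))
  rw [hpow.fderiv]
  simp only [smul_apply, ContinuousLinearMap.comp_apply, ContinuousLinearMap.coe_restrictScalars',
    ContinuousLinearMap.toSpanSingleton_apply, innerSL_apply_apply, smul_eq_mul, nsmul_eq_mul]
  push_cast
  ring

lemma fderiv_fderiv_regPow_apply (hΩ : IsOpen Ω) (hφ : DifferentiableOn ℂ φ Ω) (hε : 0 < ε)
    (q : ℝ) (v : ℂ) (hz : z ∈ Ω) :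
    fderiv ℝ (fun w => fderiv ℝ (regPow φ ε q) w v) z v
      = q * (q - 1) * (‖φ z‖ ^ 2 + ε) ^ (q - 2) * (2 * inner ℝ (φ z) (v * deriv φ z)) ^ 2
        + q * (‖φ z‖ ^ 2 + ε) ^ (q - 1) * (2 * (‖v * deriv φ z‖ ^ 2 +
          inner ℝ (φ z) (v * v * deriv (deriv φ) z))) := by
  have hdiff {χ : ℂ → ℂ} (hχ : DifferentiableOn ℂ χ Ω) {w : ℂ} (hw : w ∈ Ω) :
      DifferentiableAt ℂ χ w := hχ.differentiableAt (hΩ.mem_nhds hw)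
  have hfirst : (fun w => fderiv ℝ (regPow φ ε q) w v) =ᶠ[𝓝 z]
      fun z => q * (‖φ z‖ ^ 2 + ε) ^ (q - 1) * (2 * inner ℝ (φ z) (v * deriv φ z)) := by
    filter_upwards [hΩ.mem_nhds hz] with w hw
    exact fderiv_regPow_apply (hdiff hφ hw) hε q v
  have hφz := hasFDerivAt_real_of_differentiableAt (hdiff hφ hz)
  have hdz : HasFDerivAt (fun z => v * deriv φ z) _ z :=
    (hasFDerivAt_real_of_differentiableAt (hdiff (hφ.deriv hΩ) hz)).const_mul v
  have hpow := ((hφz.norm_sq.add_const ε).rpow_const (p := q - 1)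
    (Or.inl (by positivity))).const_mul q
  have hinner := (hφz.inner ℝ hdz).const_mul 2
  rw [hfirst.fderiv_eq, (hpow.fun_mul hinner).fderiv]
  simp only [_root_.add_apply, _root_.smul_apply,
    ContinuousLinearMap.comp_apply, ContinuousLinearMap.prod_apply, fderivInnerCLM_apply,
    ContinuousLinearMap.coe_restrictScalars', ContinuousLinearMap.toSpanSingleton_apply,
    innerSL_apply_apply, smul_eq_mul, nsmul_eq_mul]
  rw [show v * (v * deriv (deriv φ) z) = v * v * deriv (deriv φ) z by ring,
    show q - 1 - 1 = q - 2 by ring, real_inner_self_eq_norm_sq]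
  push_cast
  ring

lemma lap_regPow (hΩ : IsOpen Ω) (hφ : DifferentiableOn ℂ φ Ω) (hε : 0 < ε) (q : ℝ)
    (hz : z ∈ Ω) :
    lap (regPow φ ε q) z
      = 4 * q * (‖φ z‖ ^ 2 + ε) ^ (q - 2) * (q * ‖φ z‖ ^ 2 + ε) * ‖deriv φ z‖ ^ 2 := by
  have hpos : 0 < ‖φ z‖ ^ 2 + ε := by positivity
  have hpow : (‖φ z‖ ^ 2 + ε) ^ (q - 1) = (‖φ z‖ ^ 2 + ε) ^ (q - 2) * (‖φ z‖ ^ 2 + ε) := by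
    rw [← Real.rpow_add_one hpos.ne']
    ring_nf
  have hfirst : inner ℝ (φ z) (1 * deriv φ z) ^ 2 + inner ℝ (φ z) (Complex.I * deriv φ z) ^ 2
      = ‖φ z‖ ^ 2 * ‖deriv φ z‖ ^ 2 := by
    simp only [Complex.inner, ← Complex.normSq_eq_norm_sq, Complex.normSq_apply, mul_re, mul_im,
      conj_re, conj_im, I_re, I_im, one_re, one_im]
    ring
  have hsecond : inner ℝ (φ z) (Complex.I * Complex.I * deriv (deriv φ) z)
      = -inner ℝ (φ z) (1 * 1 * deriv (deriv φ) z) := by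
    simp
  have hI : ‖Complex.I * deriv φ z‖ = ‖1 * deriv φ z‖ := by simp
  rw [lap, fderiv_fderiv_regPow_apply hΩ hφ hε q 1 hz,
    fderiv_fderiv_regPow_apply hΩ hφ hε q Complex.I hz, hsecond, hI, hpow, one_mul]
  rw [one_mul] at hfirst
  linear_combination 4 * q * (q - 1) * (‖φ z‖ ^ 2 + ε) ^ (q - 2) * hfirst

lemma lap_regPow_nonneg (hΩ : IsOpen Ω) (hφ : DifferentiableOn ℂ φ Ω) (hε : 0 < ε) (hq : 0 ≤ q)
    (hz : z ∈ Ω) : 0 ≤ lap (regPow φ ε q) z := by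
  rw [lap_regPow hΩ hφ hε q hz]
  positivity

lemma lap_regPow_id (z : ℂ) : lap (regPow id 1 1) z = 4 := by
  rw [lap_regPow isOpen_univ differentiableOn_id one_pos 1 (mem_univ z)]
  simp only [id_eq, deriv_id, norm_one]
  rw [show (1 : ℝ) - 2 = -1 by norm_num, Real.rpow_neg_one]
  field_simp

end Laplacian

section Cutoff

lemma exists_contDiff_cutoff {K Ω : Set ℂ} (hK : IsCompact K) (hΩ : IsOpen Ω) (hKΩ : K ⊆ Ω) :
    ∃ χ : ℂ → ℝ, ContDiff ℝ 2 χ ∧ HasCompactSupport χ ∧ tsupport χ ⊆ Ω ∧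
      (∀ x ∈ K, ∀ᶠ y in 𝓝 x, χ y = 1) ∧ ∀ x, χ x ∈ Icc (0 : ℝ) 1 := by
  obtain ⟨L, hL, hKL, hLΩ⟩ := exists_compact_between hK hΩ hKΩ
  obtain ⟨χ, hone, hzero, hχ⟩ := exists_contMDiffMap_one_nhds_of_subset_interior (n := 2)
    (modelWithCornersSelf ℝ ℂ) hK.isClosed hKL
  have hts : tsupport χ ⊆ L :=
    closure_minimal (fun x hx => by_contra fun h => hx (hzero x h)) hL.isClosed
  exact ⟨χ, χ.contMDiff.contDiff, hL.of_isClosed_subset (isClosed_tsupport _) hts,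
    hts.trans hLΩ, eventually_nhdsSet_iff_forall.mp hone, hχ⟩

lemma contDiff_mul_of_tsupport_subset {Ω : Set ℂ} (hΩ : IsOpen Ω) {χ s : ℂ → ℝ}
    (hχ : ContDiff ℝ 2 χ) (hsupp : tsupport χ ⊆ Ω) (hs : ContDiffOn ℝ 2 s Ω) :
    ContDiff ℝ 2 (fun z => χ z * s z) := by
  rw [contDiff_iff_contDiffAt]
  intro z
  by_cases hz : z ∈ tsupport χ
  · exact hχ.contDiffAt.mul (hs.contDiffAt (hΩ.mem_nhds (hsupp hz)))
  · refine (contDiffAt_const (c := (0 : ℝ))).congr_of_eventuallyEq ?_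
    filter_upwards [notMem_tsupport_iff_eventuallyEq.mp hz] with w hw
    simp [hw]

lemma exists_test_function_eq_on {K Ω : Set ℂ} (hΩ : IsOpen Ω) (hK : IsCompact K) (hKΩ : K ⊆ Ω)
    {s : ℂ → ℝ} (hs : ContDiffOn ℝ 2 s Ω) (hs0 : ∀ z, 0 ≤ s z) :
    ∃ g : ℂ → ℝ, ContDiff ℝ 2 g ∧ HasCompactSupport g ∧ tsupport g ⊆ Ω ∧
      (∀ z, 0 ≤ g z) ∧ (∀ z, g z ≤ s z) ∧ ∀ z ∈ K, g z = s z ∧ lap g z = lap s z := by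
  obtain ⟨χ, hχ, hχc, hχΩ, hχ1, hχ01⟩ := exists_contDiff_cutoff hK hΩ hKΩ
  have hsub : tsupport (fun z => χ z * s z) ⊆ tsupport χ := tsupport_mul_subset_left
  refine ⟨fun z => χ z * s z, contDiff_mul_of_tsupport_subset hΩ hχ hχΩ hs,
    hχc.of_isClosed_subset (isClosed_tsupport _) hsub, hsub.trans hχΩ,
    fun z => mul_nonneg (hχ01 z).1 (hs0 z),
    fun z => mul_le_of_le_one_left (hs0 z) (hχ01 z).2, fun z hz => ⟨?_, lap_congr ?_⟩⟩
  · simp [(hχ1 z hz).self_of_nhds]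
  · filter_upwards [hχ1 z hz] with y hy
    simp [hy]

end Cutoff

/-! ### Riesz and Monge–Ampère measures -/

section Measures

lemma isSigmaCompact_of_isOpen {X : Type*} [TopologicalSpace X] [LocallyCompactSpace X]
    [SecondCountableTopology X] {V : Set X} (hV : IsOpen V) : IsSigmaCompact V := by
  have := hV.locallyCompactSpace
  exact isSigmaCompact_iff_sigmaCompactSpace.mpr inferInstance

lemma le_sub_add_of_sigmaFinite {α : Type*} [MeasurableSpace α] (a b : Measure α)
    [SigmaFinite a] [SigmaFinite b] : a ≤ a - b + b := by
  have hS (n : ℕ) : a.restrict (spanningSets (a + b) n)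
      ≤ (a - b).restrict (spanningSets (a + b) n) + b.restrict (spanningSets (a + b) n) := by
    have hlt := measure_spanningSets_lt_top (a + b) n
    rw [Measure.add_apply, ENNReal.add_lt_top] at hlt
    have : IsFiniteMeasure (a.restrict (spanningSets (a + b) n)) := ⟨by simpa using hlt.1⟩
    have : IsFiniteMeasure (b.restrict (spanningSets (a + b) n)) := ⟨by simpa using hlt.2⟩
    rw [Measure.restrict_sub_eq_restrict_sub_restrict (measurableSet_spanningSets _ n)]
    exact Measure.sub_le_iff_le_add.mp le_rfl
  refine Measure.le_iff.mpr fun E hE => ?_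
  have hE' : E = ⋃ n, E ∩ spanningSets (a + b) n := by
    rw [← inter_iUnion, iUnion_spanningSets, inter_univ]
  have hmono : Monotone fun n => E ∩ spanningSets (a + b) n :=
    fun m n hmn => inter_subset_inter_right E (monotone_spanningSets _ hmn)
  rw [hE', hmono.measure_iUnion]
  refine iSup_le fun n => ?_
  have hn := hS n E
  rw [← Measure.restrict_add, Measure.restrict_apply hE, Measure.restrict_apply hE] at hn
  exact hn.trans (measure_mono (subset_iUnion (fun n => E ∩ spanningSets (a + b) n) n))

/-- The measure `μ` is finite on the compact subsets of `Ω`. It may have infinite mass near the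
boundary, but test functions with compact support in `Ω` are integrable. -/
def FiniteOnCompactsIn {X : Type*} [TopologicalSpace X] [MeasurableSpace X] (μ : Measure X)
    (Ω : Set X) : Prop :=
  ∀ K ⊆ Ω, IsCompact K → μ K < ⊤

namespace FiniteOnCompactsIn

variable {X : Type*} [TopologicalSpace X] [MeasurableSpace X] {Ω : Set X} {μ : Measure X}

lemma mono {V : Set X} (h : FiniteOnCompactsIn μ Ω) (hV : V ⊆ Ω) : FiniteOnCompactsIn μ V :=
  fun K hKV hK => h K (hKV.trans hV) hK

lemma sigmaFinite [LocallyCompactSpace X] [SecondCountableTopology X]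
    (h : FiniteOnCompactsIn μ Ω) (hΩ : IsOpen Ω) (hc : μ Ωᶜ = 0) : SigmaFinite μ := by
  obtain ⟨K, hK, hKΩ⟩ := isSigmaCompact_of_isOpen hΩ
  refine ⟨⟨⟨fun n => K n ∪ Ωᶜ, fun _ => mem_univ _, fun n => ?_, ?_⟩⟩⟩
  · have hKn := h (K n) (hKΩ ▸ subset_iUnion K n) (hK n)
    exact (measure_union_le _ _).trans_lt (by rwa [hc, add_zero])
  · rw [← iUnion_union, hKΩ, union_compl_self]

lemma integrable [OpensMeasurableSpace X] (h : FiniteOnCompactsIn μ Ω) {φ : X → ℝ}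
    (hφ : Continuous φ) (hc : HasCompactSupport φ) (hs : tsupport φ ⊆ Ω) : Integrable φ μ := by
  rw [← integrableOn_iff_integrable_of_support_subset (subset_tsupport φ)]
  exact hφ.continuousOn.integrableOn_of_subset_isCompact hc
    (isClosed_tsupport φ).measurableSet Subset.rfl (h _ hs hc).ne

end FiniteOnCompactsIn

lemma exists_cutoff_seq_tendsto_indicator {K V : Set ℂ} (hK : IsCompact K) (hV : IsOpen V)
    (hKV : K ⊆ V) :
    ∃ χ : ℕ → ℂ → ℝ, (∀ n, ContDiff ℝ 2 (χ n)) ∧ (∀ n, HasCompactSupport (χ n)) ∧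
      (∀ n, tsupport (χ n) ⊆ V) ∧ (∀ n z, ‖χ n z‖ ≤ 1) ∧
      ∀ z, Tendsto (fun n => χ n z) atTop (𝓝 (K.indicator 1 z)) := by
  have hopen (n : ℕ) : IsOpen (thickening (1 / ((n : ℝ) + 1)) K ∩ V) :=
    isOpen_thickening.inter hV
  choose χ hχ hχc hχs hχ1 hχ01 using fun n : ℕ => exists_contDiff_cutoff hK (hopen n)
    (subset_inter (self_subset_thickening Nat.one_div_pos_of_nat K) hKV)
  refine ⟨χ, hχ, hχc, fun n => (hχs n).trans inter_subset_right, fun n z => ?_, fun z => ?_⟩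
  · rw [Real.norm_of_nonneg (hχ01 n z).1]
    exact (hχ01 n z).2
  by_cases hz : z ∈ K
  · have hone (n : ℕ) : χ n z = 1 := (hχ1 n z hz).self_of_nhds
    simp [hz, hone]
  · have hdist : ∀ᶠ n : ℕ in atTop, z ∉ thickening (1 / ((n : ℝ) + 1)) K := by
      have hcl : z ∉ closure K := by rwa [hK.isClosed.closure_eq]
      obtain ⟨δ, hδ, hzδ⟩ := Metric.exists_real_pos_lt_infEDist_of_notMem_closure hcl
      filter_upwards [tendsto_one_div_add_atTop_nhds_zero_nat.eventually_lt_const hδ]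
        with n hn hmem
      exact (mem_thickening_iff_infEDist_lt.mp hmem).not_ge
        ((ENNReal.ofReal_le_ofReal hn.le).trans hzδ.le)
    refine tendsto_const_nhds.congr' ?_
    filter_upwards [hdist] with n hn
    simp [hz, image_eq_zero_of_notMem_tsupport fun h => hn (hχs n h).1]

lemma tendsto_integral_of_tendsto_indicator {m : Measure ℂ} {K L : Set ℂ}
    (hK : IsCompact K) (hL : IsCompact L) (hmL : m L < ⊤) {χ : ℕ → ℂ → ℝ}
    (hχ : ∀ n, Continuous (χ n)) (hsupp : ∀ n, tsupport (χ n) ⊆ L) (hle : ∀ n z, ‖χ n z‖ ≤ 1)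
    (hlim : ∀ z, Tendsto (fun n => χ n z) atTop (𝓝 (K.indicator 1 z))) :
    Tendsto (fun n => ∫ z, χ n z ∂m) atTop (𝓝 (m.real K)) := by
  rw [← integral_indicator_one hK.measurableSet]
  refine tendsto_integral_of_dominated_convergence (L.indicator 1)
    (fun n => (hχ n).aestronglyMeasurable)
    ((integrable_indicator_iff hL.measurableSet).mpr (integrableOn_const hmL.ne))
    (fun n => ae_of_all _ fun z => ?_) (ae_of_all _ hlim)
  by_cases hz : z ∈ L
  · simpa [hz] using hle n z
  · simp [hz, image_eq_zero_of_notMem_tsupport fun h => hz (hsupp n h)]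

variable {a b : Measure ℂ} {V : Set ℂ}

lemma measure_isCompact_eq_of_integral_eq (hV : IsOpen V) (ha : FiniteOnCompactsIn a V)
    (hb : FiniteOnCompactsIn b V)
    (h : ∀ φ : ℂ → ℝ, ContDiff ℝ 2 φ → HasCompactSupport φ → tsupport φ ⊆ V →
      ∫ z, φ z ∂a = ∫ z, φ z ∂b) {K : Set ℂ} (hK : IsCompact K) (hKV : K ⊆ V) : a K = b K := by
  obtain ⟨L, hL, hKL, hLV⟩ := exists_compact_between hK hV hKV
  obtain ⟨χ, hχ, hχc, hχs, hle, hlim⟩ :=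
    exists_cutoff_seq_tendsto_indicator hK isOpen_interior hKL
  have htendsto {m : Measure ℂ} (hm : FiniteOnCompactsIn m V) :
      Tendsto (fun n => ∫ z, χ n z ∂m) atTop (𝓝 (m.real K)) :=
    tendsto_integral_of_tendsto_indicator hK hL (hm L hLV hL) (fun n => (hχ n).continuous)
      (fun n => (hχs n).trans interior_subset) hle hlim
  have heq (n : ℕ) : ∫ z, χ n z ∂a = ∫ z, χ n z ∂b :=
    h (χ n) (hχ n) (hχc n) ((hχs n).trans (interior_subset.trans hLV))
  have hreal : a.real K = b.real K :=
    tendsto_nhds_unique (htendsto ha) (by simpa only [heq] using htendsto hb)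
  exact (ENNReal.toReal_eq_toReal_iff' (ha K hKV hK).ne (hb K hKV hK).ne).mp hreal

lemma restrict_eq_of_integral_eq (hV : IsOpen V) (ha : FiniteOnCompactsIn a V)
    (hb : FiniteOnCompactsIn b V)
    (h : ∀ φ : ℂ → ℝ, ContDiff ℝ 2 φ → HasCompactSupport φ → tsupport φ ⊆ V →
      ∫ z, φ z ∂a = ∫ z, φ z ∂b) : a.restrict V = b.restrict V := by
  obtain ⟨L, hL, rfl⟩ := isSigmaCompact_of_isOpen hV
  refine (Measure.restrict_iUnion_congr).mpr fun n => ?_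
  have hsub : L n ⊆ ⋃ n, L n := subset_iUnion L n
  have heq {K : Set ℂ} (hK : IsClosed K) : a (K ∩ L n) = b (K ∩ L n) :=
    measure_isCompact_eq_of_integral_eq hV ha hb h ((hL n).inter_left hK)
      (inter_subset_right.trans hsub)
  have : IsFiniteMeasure (a.restrict (L n)) := ⟨by simpa using ha (L n) hsub (hL n)⟩
  refine ext_of_generate_finite _ (BorelSpace.measurable_eq.trans borel_eq_generateFrom_isClosed)
    isPiSystem_isClosed (fun K hK => ?_) ?_
  · rw [Measure.restrict_apply hK.measurableSet, Measure.restrict_apply hK.measurableSet, heq hK]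
  · simpa using heq isClosed_univ

end Measures

section RieszMeasures

variable {Ω : Set ℂ} {u : ℂ → ℝ} {ν νr : Measure ℂ} {r : ℝ}

lemma isOpen_setOf_lt_and (hΩ : IsOpen Ω) (hu : ContinuousOn u Ω) (r : ℝ) :
    IsOpen {z | z ∈ Ω ∧ u z < r} := hu.isOpen_inter_preimage hΩ isOpen_Iio

lemma isOpen_setOf_and_lt (hΩ : IsOpen Ω) (hu : ContinuousOn u Ω) (r : ℝ) :
    IsOpen {z | z ∈ Ω ∧ r < u z} := hu.isOpen_inter_preimage hΩ isOpen_Ioi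

lemma integral_sub_integral_of_isRieszMeasure {w₁ w₂ : ℂ → ℝ} (hw₁ : ContinuousOn w₁ Ω)
    (hw₂ : ContinuousOn w₂ Ω) {n₁ n₂ : Measure ℂ} (h₁ : IsRieszMeasure w₁ Ω n₁)
    (h₂ : IsRieszMeasure w₂ Ω n₂) {φ : ℂ → ℝ} (hφ : ContDiff ℝ 2 φ) (hc : HasCompactSupport φ)
    (hs : tsupport φ ⊆ Ω) :
    ∫ z, φ z ∂n₁ - ∫ z, φ z ∂n₂ = (4 : ℝ)⁻¹ * ∫ z in Ω, (w₁ z - w₂ z) * lap φ z := by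
  rw [h₁.2 φ hφ hc hs, h₂.2 φ hφ hc hs, ← mul_sub,
    ← integral_sub (integrableOn_mul_lap hw₁ hφ hc hs) (integrableOn_mul_lap hw₂ hφ hc hs)]
  simp_rw [sub_mul]

-- Testing against a cutoff of `|z|² + 1` shows that truncation strictly adds mass. In particular
-- the integral against `νr` is nonzero, which rules out the junk value of a divergent integral.
lemma exists_test_function_integral_lt (hΩ : IsOpen Ω) (hu : IsExhaustion u Ω)
    (hν : IsRieszMeasure u Ω ν) (hνr : IsRieszMeasure (fun z => max (u z) r) Ω νr) (hr : r < 0)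
    (hne : ∃ z ∈ Ω, u z < r) {K : Set ℂ} (hK : IsCompact K) (hKΩ : K ⊆ Ω) :
    ∃ g : ℂ → ℝ, Continuous g ∧ HasCompactSupport g ∧ tsupport g ⊆ Ω ∧ (∀ z, 0 ≤ g z) ∧
      (∀ z ∈ K, 1 ≤ g z) ∧ ∫ z, g z ∂ν < ∫ z, g z ∂νr := by
  have hcu := hu.subh.1
  have hcmax : ContinuousOn (fun z => max (u z) r) Ω := hcu.sup continuousOn_const
  obtain ⟨hcl, hclΩ⟩ := hu.exh r hr
  obtain ⟨g, hg, hgc, hgΩ, hg0, -, hgK⟩ := exists_test_function_eq_on hΩ (hK.union hcl)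
    (union_subset hKΩ hclΩ) (contDiffOn_regPow hΩ differentiableOn_id one_pos 1)
    (regPow_nonneg id zero_le_one 1)
  have hlap {z : ℂ} (hz : z ∈ Ω ∧ u z < r) : lap g z = 4 := by
    rw [(hgK z (Or.inr (subset_closure hz))).2, lap_regPow_id]
  have hnonneg : ∀ z ∈ Ω, 0 ≤ (max (u z) r - u z) * lap g z := by
    intro z hz
    rcases lt_or_ge (u z) r with h | h
    · rw [hlap ⟨hz, h⟩]
      exact mul_nonneg (sub_nonneg.mpr (le_max_left _ _)) zero_le_four
    · simp [max_eq_left h]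
  have hsubset : {z | z ∈ Ω ∧ u z < r} ⊆
      Function.support (fun z => (max (u z) r - u z) * lap g z) ∩ Ω := by
    refine fun z hz => ⟨mul_ne_zero ?_ (by simp [hlap hz]), hz.1⟩
    rw [max_eq_right hz.2.le]
    exact (sub_pos.mpr hz.2).ne'
  have hpos : 0 < ∫ z in Ω, (max (u z) r - u z) * lap g z := by
    rw [setIntegral_pos_iff_support_of_nonneg_ae
      ((ae_restrict_iff' hΩ.measurableSet).mpr (ae_of_all _ hnonneg))
      (integrableOn_mul_lap (hcmax.sub hcu) hg hgc hgΩ)]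
    exact ((isOpen_setOf_lt_and hΩ hcu r).measure_pos volume hne).trans_le (measure_mono hsubset)
  refine ⟨g, hg.continuous, hgc, hgΩ, hg0, fun z hz => ?_, ?_⟩
  · rw [(hgK z (Or.inl hz)).1, regPow, Real.rpow_one]
    linarith [sq_nonneg ‖id z‖]
  · rw [← sub_pos, integral_sub_integral_of_isRieszMeasure hcmax hcu hνr hν hg hgc hgΩ]
    positivity

lemma finiteOnCompactsIn_of_isRieszMeasure_max (hΩ : IsOpen Ω) (hu : IsExhaustion u Ω)
    (hν : IsRieszMeasure u Ω ν) (hνr : IsRieszMeasure (fun z => max (u z) r) Ω νr) (hr : r < 0)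
    (hne : ∃ z ∈ Ω, u z < r) : FiniteOnCompactsIn νr Ω := by
  intro K hKΩ hK
  obtain ⟨g, -, -, -, hg0, hg1, hlt⟩ :=
    exists_test_function_integral_lt hΩ hu hν hνr hr hne hK hKΩ
  have hint : Integrable g νr :=
    .of_integral_ne_zero ((integral_nonneg hg0).trans_lt hlt).ne'
  calc νr K = ∫⁻ _ in K, 1 ∂νr := by simp
    _ ≤ ∫⁻ z in K, ENNReal.ofReal (g z) ∂νr :=
      setLIntegral_mono' hK.measurableSet fun z hz => by simpa using hg1 z hz
    _ ≤ ∫⁻ z, ENNReal.ofReal (g z) ∂νr := setLIntegral_le_lintegral _ _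
    _ < ⊤ := hint.lintegral_lt_top

lemma isRieszMeasure_max_sublevel_eq_zero (hΩ : IsOpen Ω) (hu : ContinuousOn u Ω)
    (hνr : IsRieszMeasure (fun z => max (u z) r) Ω νr) (hfin : FiniteOnCompactsIn νr Ω) :
    νr {z | z ∈ Ω ∧ u z < r} = 0 := by
  rw [← Measure.restrict_eq_zero, ← Measure.restrict_zero (s := {z | z ∈ Ω ∧ u z < r})]
  refine restrict_eq_of_integral_eq (isOpen_setOf_lt_and hΩ hu r) (hfin.mono fun _ hz => hz.1)
    (fun K _ _ => by simp) fun φ hφ hc hs => ?_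
  have hsΩ : tsupport φ ⊆ Ω := hs.trans fun z hz => hz.1
  have hconst (z : ℂ) : max (u z) r * lap φ z = r * lap φ z := by
    by_cases hz : z ∈ tsupport φ
    · rw [max_eq_right (hs hz).2.le]
    · simp [lap_eq_zero_of_notMem_tsupport hz]
  simp_rw [hνr.2 φ hφ hc hsΩ, hconst]
  rw [integral_const_mul, setIntegral_eq_integral_of_forall_compl_eq_zero
    fun z hz => lap_eq_zero_of_notMem_tsupport fun h => hz (hsΩ h), integral_lap_eq_zero hφ hc]
  simp

lemma isRieszMeasure_max_restrict_superlevel (hΩ : IsOpen Ω) (hu : ContinuousOn u Ω)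
    (hν : IsRieszMeasure u Ω ν) (hνfin : FiniteOnCompactsIn ν Ω)
    (hνr : IsRieszMeasure (fun z => max (u z) r) Ω νr) (hfin : FiniteOnCompactsIn νr Ω) :
    νr.restrict {z | z ∈ Ω ∧ r < u z} = ν.restrict {z | z ∈ Ω ∧ r < u z} := by
  have hVΩ : {z | z ∈ Ω ∧ r < u z} ⊆ Ω := fun z hz => hz.1
  refine restrict_eq_of_integral_eq (isOpen_setOf_and_lt hΩ hu r) (hfin.mono hVΩ)
    (hνfin.mono hVΩ) fun φ hφ hc hs => ?_
  have heq (z : ℂ) : max (u z) r * lap φ z = u z * lap φ z := by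
    by_cases hz : z ∈ tsupport φ
    · rw [max_eq_left (hs hz).2.le]
    · simp [lap_eq_zero_of_notMem_tsupport hz]
  simp_rw [hνr.2 φ hφ hc (hs.trans hVΩ), hν.2 φ hφ hc (hs.trans hVΩ), heq]

lemma psNormPow_const_mul {p c : ℝ} (hc : 0 ≤ c) (μ : ℝ → Measure ℂ) (f : ℂ → ℂ) :
    psNormPow p μ (fun z => c * f z) = ENNReal.ofReal (c ^ p) * psNormPow p μ f := by
  have hmul (z : ℂ) : ENNReal.ofReal (‖c * f z‖ ^ p) =
      ENNReal.ofReal (c ^ p) * ENNReal.ofReal (‖f z‖ ^ p) := by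
    rw [norm_mul, Complex.norm_real, Real.norm_of_nonneg hc, Real.mul_rpow hc (norm_nonneg _),
      ENNReal.ofReal_mul (by positivity)]
  simp only [psNormPow, hmul, lintegral_const_mul' _ _ ENNReal.ofReal_ne_top]
  exact ENNReal.limsup_const_mul_of_ne_top ENNReal.ofReal_ne_top

end RieszMeasures

/-- `μ r` is the Monge–Ampère measure `μ_{u,r}` for every `r < 0`, where `u` is an exhaustion of
the open set `Ω` with Riesz measure `ν`. The total mass of `ν` may be infinite: finiteness on
compact subsets of `Ω` is what makes the integrals of test functions meaningful. -/
structure IsPSFamily (Ω : Set ℂ) (u : ℂ → ℝ) (ν : Measure ℂ) (μ : ℝ → Measure ℂ) : Prop where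
  isOpen : IsOpen Ω
  exhaustion : IsExhaustion u Ω
  riesz : IsRieszMeasure u Ω ν
  finiteOnCompacts : FiniteOnCompactsIn ν Ω
  isMAMeasure : ∀ r : ℝ, r < 0 → IsMAMeasure u Ω ν r (μ r)

namespace IsPSFamily

variable {Ω : Set ℂ} {u : ℂ → ℝ} {ν : Measure ℂ} {μ : ℝ → Measure ℂ} {r R : ℝ}

lemma continuousOn (h : IsPSFamily Ω u ν μ) : ContinuousOn u Ω := h.exhaustion.subh.1

lemma ae_mem_and_eq (h : IsPSFamily Ω u ν μ) (hr : r < 0) (hne : ∃ z ∈ Ω, u z < r) :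
    ∀ᵐ z ∂(μ r), z ∈ Ω ∧ u z = r := by
  obtain ⟨νr, hνr, hμ⟩ := h.isMAMeasure r hr
  have hfin :=
    finiteOnCompactsIn_of_isRieszMeasure_max h.isOpen h.exhaustion h.riesz hνr hr hne
  have hle : μ r ≤ νr := hμ ▸ Measure.sub_le
  have hcompl : μ r Ωᶜ = 0 := nonpos_iff_eq_zero.mp ((hle _).trans hνr.1.le)
  have hsub : μ r {z | z ∈ Ω ∧ u z < r} = 0 := nonpos_iff_eq_zero.mp
    ((hle _).trans (isRieszMeasure_max_sublevel_eq_zero h.isOpen h.continuousOn hνr hfin).le)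
  have hV := (isOpen_setOf_and_lt h.isOpen h.continuousOn r).measurableSet
  have hsuper : μ r {z | z ∈ Ω ∧ r < u z} = 0 := by
    rw [hμ]
    refine Measure.sub_apply_eq_zero_of_restrict_le_restrict ?_ hV
    have hinter : {z | z ∈ Ω ∧ r < u z} ∩ {z | z ∈ Ω ∧ r ≤ u z} = {z | z ∈ Ω ∧ r < u z} :=
      inter_eq_self_of_subset_left fun z hz => ⟨hz.1, hz.2.le⟩
    rw [Measure.restrict_restrict hV, hinter,
      isRieszMeasure_max_restrict_superlevel h.isOpen h.continuousOn h.riesz h.finiteOnCompacts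
        hνr hfin]
  refine ae_iff.mpr (measure_mono_null (fun z hz => ?_)
    (measure_union_null hcompl (measure_union_null hsub hsuper)))
  by_cases hzΩ : z ∈ Ω
  · rcases lt_or_gt_of_ne fun heq => hz ⟨hzΩ, heq⟩ with hlt | hgt
    exacts [Or.inr (Or.inl ⟨hzΩ, hlt⟩), Or.inr (Or.inr ⟨hzΩ, hgt⟩)]
  · exact Or.inl hzΩ

lemma exists_isRieszMeasure_max (h : IsPSFamily Ω u ν μ) (hr : r < 0) (hne : ∃ z ∈ Ω, u z < r) :
    ∃ νr, IsRieszMeasure (fun z => max (u z) r) Ω νr ∧ FiniteOnCompactsIn νr Ω ∧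
      μ r + ν.restrict {z | z ∈ Ω ∧ r < u z} ≤ νr ∧
      νr ≤ μ r + ν.restrict {z | z ∈ Ω ∧ r ≤ u z} := by
  obtain ⟨νr, hνr, hμ⟩ := h.isMAMeasure r hr
  have hfin :=
    finiteOnCompactsIn_of_isRieszMeasure_max h.isOpen h.exhaustion h.riesz hνr hr hne
  refine ⟨νr, hνr, hfin, ?_, ?_⟩
  · have hV := (isOpen_setOf_and_lt h.isOpen h.continuousOn r).measurableSet
    have hsupp : (μ r).restrict {z | z ∈ Ω ∧ r < u z}ᶜ = μ r := by
      refine Measure.restrict_eq_self_of_ae_mem ?_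
      filter_upwards [h.ae_mem_and_eq hr hne] with z hz hlt
      exact hlt.2.ne' hz.2
    calc μ r + ν.restrict {z | z ∈ Ω ∧ r < u z}
        = (μ r).restrict {z | z ∈ Ω ∧ r < u z}ᶜ + νr.restrict {z | z ∈ Ω ∧ r < u z} := by
          rw [hsupp, isRieszMeasure_max_restrict_superlevel h.isOpen h.continuousOn h.riesz
            h.finiteOnCompacts hνr hfin]
      _ ≤ νr.restrict {z | z ∈ Ω ∧ r < u z}ᶜ + νr.restrict {z | z ∈ Ω ∧ r < u z} := by
          gcongr
          exact hμ ▸ Measure.sub_le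
      _ = νr := Measure.restrict_compl_add_restrict hV
  · have := hfin.sigmaFinite h.isOpen hνr.1
    have := h.finiteOnCompacts.sigmaFinite h.isOpen h.riesz.1
    rw [hμ]
    exact le_sub_add_of_sigmaFinite _ _

lemma exists_isCompact_measure_pos (h : IsPSFamily Ω u ν μ) (hr : r < 0)
    (hne : ∃ z ∈ Ω, u z < r) : ∃ K, IsCompact K ∧ K ⊆ Ω ∧ 0 < μ r K := by
  obtain ⟨νr, hνr, -, -, hle⟩ := h.exists_isRieszMeasure_max hr hne
  obtain ⟨g, hg, hgc, hgΩ, hg0, -, hlt⟩ := exists_test_function_integral_lt h.isOpen h.exhaustion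
    h.riesz hνr hr hne isCompact_empty (empty_subset _)
  refine ⟨tsupport g, hgc, hgΩ, pos_iff_ne_zero.mpr fun hzero => hlt.not_ge ?_⟩
  have hμ : ∫⁻ z, ENNReal.ofReal (g z) ∂(μ r) = 0 := by
    refine lintegral_eq_zero_of_ae_eq_zero ?_
    filter_upwards [measure_eq_zero_iff_ae_notMem.mp hzero] with z hz
    simp [image_eq_zero_of_notMem_tsupport hz]
  rw [integral_eq_lintegral_of_nonneg_ae (ae_of_all _ hg0) hg.aestronglyMeasurable,
    integral_eq_lintegral_of_nonneg_ae (ae_of_all _ hg0) hg.aestronglyMeasurable]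
  refine ENNReal.toReal_mono
    (h.finiteOnCompacts.integrable hg hgc hgΩ).lintegral_lt_top.ne ?_
  calc ∫⁻ z, ENNReal.ofReal (g z) ∂νr
      ≤ ∫⁻ z, ENNReal.ofReal (g z) ∂(μ r + ν.restrict {z | z ∈ Ω ∧ r ≤ u z}) :=
        lintegral_mono' hle le_rfl
    _ = ∫⁻ z in {z | z ∈ Ω ∧ r ≤ u z}, ENNReal.ofReal (g z) ∂ν := by
        rw [lintegral_add_measure, hμ, zero_add]
    _ ≤ ∫⁻ z, ENNReal.ofReal (g z) ∂ν := setLIntegral_le_lintegral _ _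

lemma exists_test_function_eq_regPow (h : IsPSFamily Ω u ν μ) (hR : R < 0) {φ : ℂ → ℂ}
    (hφ : DifferentiableOn ℂ φ Ω) {ε : ℝ} (hε : 0 < ε) (q : ℝ) :
    ∃ g : ℂ → ℝ, ContDiff ℝ 2 g ∧ HasCompactSupport g ∧ tsupport g ⊆ Ω ∧ (∀ z, 0 ≤ g z) ∧
      (∀ z, g z ≤ regPow φ ε q z) ∧
      ∀ z ∈ Ω, u z ≤ R → g z = regPow φ ε q z ∧ lap g z = lap (regPow φ ε q) z := by
  obtain ⟨hcl, hclΩ⟩ := h.exhaustion.exh (R / 2) (by linarith)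
  obtain ⟨g, hg, hgc, hgΩ, hg0, hgle, hgK⟩ := exists_test_function_eq_on h.isOpen hcl hclΩ
    (contDiffOn_regPow h.isOpen hφ hε q) (regPow_nonneg φ hε.le q)
  exact ⟨g, hg, hgc, hgΩ, hg0, hgle,
    fun z hz hzR => hgK z (subset_closure ⟨hz, by linarith⟩)⟩

lemma lintegral_regPow_lt_top (h : IsPSFamily Ω u ν μ) (hr : r < 0) (hne : ∃ z ∈ Ω, u z < r)
    {φ : ℂ → ℂ} (hφ : DifferentiableOn ℂ φ Ω) {ε : ℝ} (hε : 0 < ε) (q : ℝ) :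
    ∫⁻ z, ENNReal.ofReal (regPow φ ε q z) ∂(μ r) < ⊤ := by
  obtain ⟨g, hg, hgc, hgΩ, -, -, hgr⟩ := h.exists_test_function_eq_regPow hr hφ hε q
  obtain ⟨νr, -, hfin, hle, -⟩ := h.exists_isRieszMeasure_max hr hne
  have hcongr : (fun z => ENNReal.ofReal (regPow φ ε q z)) =ᵐ[μ r]
      fun z => ENNReal.ofReal (g z) := by
    filter_upwards [h.ae_mem_and_eq hr hne] with z hz
    rw [(hgr z hz.1 hz.2.le).1]
  calc ∫⁻ z, ENNReal.ofReal (regPow φ ε q z) ∂(μ r)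
      = ∫⁻ z, ENNReal.ofReal (g z) ∂(μ r) := lintegral_congr_ae hcongr
    _ ≤ ∫⁻ z, ENNReal.ofReal (g z) ∂νr :=
        lintegral_mono' ((Measure.le_add_right le_rfl).trans hle) le_rfl
    _ < ⊤ := (hfin.integrable hg.continuous hgc hgΩ).lintegral_lt_top

lemma lintegral_le_of_subharmonic_test (h : IsPSFamily Ω u ν μ) (hrR : r < R) (hR : R < 0)
    (hne : ∃ z ∈ Ω, u z < r) {g : ℂ → ℝ} (hg : ContDiff ℝ 2 g) (hgc : HasCompactSupport g)
    (hgΩ : tsupport g ⊆ Ω) (hg0 : ∀ z, 0 ≤ g z) (hlap : ∀ z ∈ Ω, u z ≤ R → 0 ≤ lap g z) :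
    ∫⁻ z, ENNReal.ofReal (g z) ∂(μ r) ≤ ∫⁻ z, ENNReal.ofReal (g z) ∂(μ R) := by
  obtain ⟨νr, hνr, hfinr, hler, -⟩ := h.exists_isRieszMeasure_max (hrR.trans hR) hne
  obtain ⟨νR, hνR, hfinR, -, hleR⟩ :=
    h.exists_isRieszMeasure_max hR (hne.imp fun z hz => ⟨hz.1, hz.2.trans hrR⟩)
  have hcmax (c : ℝ) : ContinuousOn (fun z => max (u z) c) Ω :=
    h.continuousOn.sup continuousOn_const
  have hnonneg : 0 ≤ ∫ z in Ω, (max (u z) R - max (u z) r) * lap g z := by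
    refine setIntegral_nonneg h.isOpen.measurableSet fun z hz => ?_
    rcases le_or_gt (u z) R with huR | huR
    · exact mul_nonneg (sub_nonneg.mpr (max_le_max le_rfl hrR.le)) (hlap z hz huR)
    · simp [max_eq_left huR.le, max_eq_left (hrR.trans huR).le]
  have hint : ∫ z, g z ∂νr ≤ ∫ z, g z ∂νR := by
    rw [← sub_nonneg,
      integral_sub_integral_of_isRieszMeasure (hcmax R) (hcmax r) hνR hνr hg hgc hgΩ]
    positivity
  have hνfin : ∫⁻ z in {z | z ∈ Ω ∧ r < u z}, ENNReal.ofReal (g z) ∂ν ≠ ⊤ :=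
    ((setLIntegral_le_lintegral _ _).trans_lt
      (h.finiteOnCompacts.integrable hg.continuous hgc hgΩ).lintegral_lt_top).ne
  refine ENNReal.le_of_add_le_add_right hνfin ?_
  calc ∫⁻ z, ENNReal.ofReal (g z) ∂(μ r) +
        ∫⁻ z in {z | z ∈ Ω ∧ r < u z}, ENNReal.ofReal (g z) ∂ν
      ≤ ∫⁻ z, ENNReal.ofReal (g z) ∂νr := by
        rw [← lintegral_add_measure]
        exact lintegral_mono' hler le_rfl
    _ ≤ ∫⁻ z, ENNReal.ofReal (g z) ∂νR := by
        rw [← ofReal_integral_eq_lintegral_ofReal (hfinr.integrable hg.continuous hgc hgΩ)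
          (ae_of_all _ hg0), ← ofReal_integral_eq_lintegral_ofReal
          (hfinR.integrable hg.continuous hgc hgΩ) (ae_of_all _ hg0)]
        exact ENNReal.ofReal_le_ofReal hint
    _ ≤ ∫⁻ z, ENNReal.ofReal (g z) ∂(μ R) +
        ∫⁻ z in {z | z ∈ Ω ∧ R ≤ u z}, ENNReal.ofReal (g z) ∂ν := by
        rw [← lintegral_add_measure]
        exact lintegral_mono' hleR le_rfl
    _ ≤ ∫⁻ z, ENNReal.ofReal (g z) ∂(μ R) +
        ∫⁻ z in {z | z ∈ Ω ∧ r < u z}, ENNReal.ofReal (g z) ∂ν := by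
        gcongr

lemma lintegral_regPow_le (h : IsPSFamily Ω u ν μ) (hrR : r < R) (hR : R < 0)
    (hne : ∃ z ∈ Ω, u z < r) {φ : ℂ → ℂ} (hφ : DifferentiableOn ℂ φ Ω) {ε q : ℝ} (hε : 0 < ε)
    (hq : 0 ≤ q) :
    ∫⁻ z, ENNReal.ofReal (regPow φ ε q z) ∂(μ r) ≤
      ∫⁻ z, ENNReal.ofReal (regPow φ ε q z) ∂(μ R) := by
  obtain ⟨g, hg, hgc, hgΩ, hg0, hgle, hgR⟩ := h.exists_test_function_eq_regPow hR hφ hε q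
  have hcongr : (fun z => ENNReal.ofReal (regPow φ ε q z)) =ᵐ[μ r]
      fun z => ENNReal.ofReal (g z) := by
    filter_upwards [h.ae_mem_and_eq (hrR.trans hR) hne] with z hz
    rw [(hgR z hz.1 (hz.2.trans_le hrR.le)).1]
  have hlap (z : ℂ) (hz : z ∈ Ω) (huz : u z ≤ R) : 0 ≤ lap g z := by
    rw [(hgR z hz huz).2]
    exact lap_regPow_nonneg h.isOpen hφ hε hq hz
  calc ∫⁻ z, ENNReal.ofReal (regPow φ ε q z) ∂(μ r)
      = ∫⁻ z, ENNReal.ofReal (g z) ∂(μ r) := lintegral_congr_ae hcongr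
    _ ≤ ∫⁻ z, ENNReal.ofReal (g z) ∂(μ R) :=
        h.lintegral_le_of_subharmonic_test hrR hR hne hg hgc hgΩ hg0 hlap
    _ ≤ ∫⁻ z, ENNReal.ofReal (regPow φ ε q z) ∂(μ R) :=
        lintegral_mono fun z => ENNReal.ofReal_le_ofReal (hgle z)

lemma aemeasurable_of_continuousOn (h : IsPSFamily Ω u ν μ) (hr : r < 0)
    (hne : ∃ z ∈ Ω, u z < r) {β : Type*} [TopologicalSpace β] [MeasurableSpace β] [BorelSpace β]
    {s : ℂ → β} (hs : ContinuousOn s Ω) : AEMeasurable s (μ r) := by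
  have hres : (μ r).restrict Ω = μ r := Measure.restrict_eq_self_of_ae_mem
    ((h.ae_mem_and_eq hr hne).mono fun z hz => hz.1)
  exact hres ▸ hs.aemeasurable h.isOpen.measurableSet

lemma lintegral_rpow_norm_le (h : IsPSFamily Ω u ν μ) (hrR : r < R) (hR : R < 0)
    (hne : ∃ z ∈ Ω, u z < r) {φ : ℂ → ℂ} (hφ : DifferentiableOn ℂ φ Ω) {p : ℝ} (hp : 0 < p) :
    ∫⁻ z, ENNReal.ofReal (‖φ z‖ ^ p) ∂(μ r) ≤ ∫⁻ z, ENNReal.ofReal (‖φ z‖ ^ p) ∂(μ R) := by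
  have hneR : ∃ z ∈ Ω, u z < R := hne.imp fun z hz => ⟨hz.1, hz.2.trans hrR⟩
  have hε (n : ℕ) : (0 : ℝ) < 1 / ((n : ℝ) + 1) := Nat.one_div_pos_of_nat
  have hε1 (n : ℕ) : 1 / ((n : ℝ) + 1) ≤ 1 :=
    div_le_one_of_le₀ (by linarith [n.cast_nonneg (α := ℝ)]) (by positivity)
  have hle (n : ℕ) : ∫⁻ z, ENNReal.ofReal (‖φ z‖ ^ p) ∂(μ r) ≤
      ∫⁻ z, ENNReal.ofReal (regPow φ (1 / ((n : ℝ) + 1)) (p / 2) z) ∂(μ R) := by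
    refine le_trans (lintegral_mono fun z => ENNReal.ofReal_le_ofReal ?_)
      (h.lintegral_regPow_le hrR hR hne hφ (hε n) (by positivity))
    rw [← regPow_zero_half]
    exact regPow_mono φ le_rfl (hε n).le (by positivity) z
  refine ge_of_tendsto' (tendsto_lintegral_of_dominated_convergence'
    (fun z => ENNReal.ofReal (regPow φ 1 (p / 2) z)) (fun n => ?_)
    (fun n => ae_of_all _ fun z => ENNReal.ofReal_le_ofReal
      (regPow_mono φ (hε n).le (hε1 n) (by positivity) z))
    (h.lintegral_regPow_lt_top hR hneR hφ one_pos _).ne (ae_of_all _ fun z => ?_)) hle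
  · exact h.aemeasurable_of_continuousOn hR hneR (ENNReal.continuous_ofReal.comp_continuousOn
      (contDiffOn_regPow h.isOpen hφ (hε n) _).continuousOn)
  · refine (ENNReal.continuous_ofReal.tendsto _).comp ?_
    rw [← regPow_zero_half]
    exact (tendsto_const_nhds.add tendsto_one_div_add_atTop_nhds_zero_nat).rpow_const
      (Or.inr (by positivity))

lemma lintegral_rpow_norm_le_psNormPow (h : IsPSFamily Ω u ν μ) (hr : r < 0)
    (hne : ∃ z ∈ Ω, u z < r) {φ : ℂ → ℂ} (hφ : DifferentiableOn ℂ φ Ω) {p : ℝ} (hp : 0 < p) :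
    ∫⁻ z, ENNReal.ofReal (‖φ z‖ ^ p) ∂(μ r) ≤ psNormPow p μ φ := by
  refine le_limsup_of_frequently_le (Eventually.frequently ?_)
  filter_upwards [Ioo_mem_nhdsLT hr] with R hR
  exact h.lintegral_rpow_norm_le hR.1 hR.2 hne hφ hp

lemma eventually_exists_lt (h : IsPSFamily Ω u ν μ) (hΩ : Ω.Nonempty) :
    ∀ᶠ r in 𝓝[<] (0 : ℝ), r < 0 ∧ ∃ z ∈ Ω, u z < r := by
  obtain ⟨z, hz⟩ := hΩ
  filter_upwards [Ioo_mem_nhdsLT (h.exhaustion.neg z hz)] with r hr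
  exact ⟨hr.2, z, hz, hr.1⟩

lemma psNormPow_mono_of_norm_le (h : IsPSFamily Ω u ν μ) (hΩ : Ω.Nonempty) {L : Set ℂ}
    (hL : IsCompact L) (hLΩ : L ⊆ Ω) {φ f : ℂ → ℂ} {p q : ℝ}
    (hle : ∀ z ∈ Ω, z ∉ L → ‖φ z‖ ^ q ≤ ‖f z‖ ^ p) : psNormPow q μ φ ≤ psNormPow p μ f := by
  obtain ⟨c, hc, hcL⟩ : ∃ c < 0, ∀ z ∈ L, u z ≤ c := by
    rcases L.eq_empty_or_nonempty with rfl | hne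
    · exact ⟨-1, by norm_num, by simp⟩
    · obtain ⟨y, hy, hmax⟩ := hL.exists_isMaxOn hne (h.continuousOn.mono hLΩ)
      exact ⟨u y, h.exhaustion.neg y (hLΩ hy), fun z hz => hmax hz⟩
  refine limsup_le_limsup ?_
  filter_upwards [h.eventually_exists_lt hΩ, Ioo_mem_nhdsLT hc] with r hr hcr
  refine lintegral_mono_ae ?_
  filter_upwards [h.ae_mem_and_eq hr.1 hr.2] with z hz
  refine ENNReal.ofReal_le_ofReal (hle z hz.1 fun hzL => ?_)
  exact (hcL z hzL).not_gt (hz.2 ▸ hcr.1)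

lemma psNormPow_le_of_tendsto (h : IsPSFamily Ω u ν μ) (hΩ : Ω.Nonempty) {p : ℝ} (hp : 0 < p)
    {F : ℕ → ℂ → ℂ} {G : ℂ → ℂ} (hF : ∀ n, DifferentiableOn ℂ (F n) Ω)
    (hlim : ∀ z ∈ Ω, Tendsto (fun n => F n z) atTop (𝓝 (G z))) {M : ℝ≥0∞}
    (hM : ∀ n, psNormPow p μ (F n) ≤ M) : psNormPow p μ G ≤ M := by
  refine limsup_le_of_le (h := ?_)
  filter_upwards [h.eventually_exists_lt hΩ] with r hr
  have hcont : Continuous fun w : ℂ => ENNReal.ofReal (‖w‖ ^ p) :=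
    ENNReal.continuous_ofReal.comp (continuous_norm.rpow_const fun _ => Or.inr hp.le)
  calc ∫⁻ z, ENNReal.ofReal (‖G z‖ ^ p) ∂(μ r)
      = ∫⁻ z, liminf (fun n => ENNReal.ofReal (‖F n z‖ ^ p)) atTop ∂(μ r) := by
        refine lintegral_congr_ae ?_
        filter_upwards [h.ae_mem_and_eq hr.1 hr.2] with z hz
        exact ((hcont.tendsto _).comp (hlim z hz.1)).liminf_eq.symm
    _ ≤ liminf (fun n => ∫⁻ z, ENNReal.ofReal (‖F n z‖ ^ p) ∂(μ r)) atTop :=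
        lintegral_liminf_le' fun n => h.aemeasurable_of_continuousOn hr.1 hr.2
          (hcont.comp_continuousOn (hF n).continuousOn)
    _ ≤ M := liminf_le_of_le (h := fun b hb => (hb.exists.elim fun n hn => hn.trans
        ((h.lintegral_rpow_norm_le_psNormPow hr.1 hr.2 (hF n) hp).trans (hM n))))

lemma exists_isCompact_rpow_mul_le_psNormPow (h : IsPSFamily Ω u ν μ) (hΩ : Ω.Nonempty) {p : ℝ}
    (hp : 0 < p) :
    ∃ K δ, IsCompact K ∧ K ⊆ Ω ∧ 0 < δ ∧ ∀ φ : ℂ → ℂ, DifferentiableOn ℂ φ Ω → ∀ c : ℝ,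
      0 ≤ c → (∀ z ∈ K, c ≤ ‖φ z‖) → ENNReal.ofReal (c ^ p) * δ ≤ psNormPow p μ φ := by
  obtain ⟨r, hr, hne⟩ := (h.eventually_exists_lt hΩ).exists
  obtain ⟨K, hK, hKΩ, hpos⟩ := h.exists_isCompact_measure_pos hr hne
  refine ⟨K, μ r K, hK, hKΩ, hpos, fun φ hφ c hc hcφ => ?_⟩
  calc ENNReal.ofReal (c ^ p) * μ r K = ∫⁻ _ in K, ENNReal.ofReal (c ^ p) ∂(μ r) := by simp
    _ ≤ ∫⁻ z in K, ENNReal.ofReal (‖φ z‖ ^ p) ∂(μ r) :=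
        setLIntegral_mono' hK.measurableSet fun z hz =>
          ENNReal.ofReal_le_ofReal (Real.rpow_le_rpow hc (hcφ z hz) hp.le)
    _ ≤ ∫⁻ z, ENNReal.ofReal (‖φ z‖ ^ p) ∂(μ r) := setLIntegral_le_lintegral _ _
    _ ≤ psNormPow p μ φ := h.lintegral_rpow_norm_le_psNormPow hr hne hφ hp

end IsPSFamily

/-! ### Blaschke products -/

section BlaschkeFactor

/-- The Blaschke factor of the disc, normalized to be positive at the origin: for `0 < ‖a‖ < 1` it
is `(‖a‖ / a) * (a - z) / (1 - conj a * z)`. It is written as `1` minus the defect controlling the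
convergence of Blaschke products, so that it is identically `1` when `‖a‖ = 1`; such `a` serve as
padding in the zero sequence of a function with finitely many zeros. -/
def blaschkeFactor (a z : ℂ) : ℂ :=
  1 - (1 - (‖a‖ : ℂ)) * (a + ‖a‖ * z) / (a * (1 - conj a * z))

variable {a z : ℂ}

lemma one_sub_norm_mul_norm_le (a z : ℂ) : 1 - ‖a‖ * ‖z‖ ≤ ‖1 - conj a * z‖ := by
  simpa using norm_sub_norm_le (1 : ℂ) (conj a * z)

lemma one_sub_conj_mul_ne_zero (h : ‖a‖ * ‖z‖ < 1) : 1 - conj a * z ≠ 0 :=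
  norm_pos_iff.mp ((sub_pos.mpr h).trans_le (one_sub_norm_mul_norm_le a z))

lemma blaschkeFactor_of_norm_eq_one (ha : ‖a‖ = 1) : blaschkeFactor a z = 1 := by
  simp [blaschkeFactor, ha]

lemma blaschkeFactor_eq (ha : a ≠ 0) (h : ‖a‖ * ‖z‖ < 1) :
    blaschkeFactor a z = ‖a‖ / a * ((a - z) / (1 - conj a * z)) := by
  have hden := mul_ne_zero ha (one_sub_conj_mul_ne_zero h)
  rw [blaschkeFactor, div_mul_div_comm, eq_div_iff hden, sub_mul, div_mul_cancel₀ _ hden]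
  linear_combination -z * mul_conj' a

lemma blaschkeFactor_zero (ha : a ≠ 0) : blaschkeFactor a 0 = ‖a‖ := by
  rw [blaschkeFactor_eq ha (by simp)]
  field_simp
  simp

lemma norm_blaschkeFactor (ha : a ≠ 0) (h : ‖a‖ * ‖z‖ < 1) :
    ‖blaschkeFactor a z‖ = ‖a - z‖ / ‖1 - conj a * z‖ := by
  rw [blaschkeFactor_eq ha h, norm_mul, norm_div, norm_div, norm_real, norm_norm,
    div_self (norm_ne_zero_iff.mpr ha), one_mul]

lemma norm_sq_one_sub_conj_mul_sub (a z : ℂ) :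
    ‖1 - conj a * z‖ ^ 2 - ‖a - z‖ ^ 2 = (1 - ‖a‖ ^ 2) * (1 - ‖z‖ ^ 2) := by
  simp only [← normSq_eq_norm_sq, normSq_apply, sub_re, sub_im, mul_re, mul_im, conj_re, conj_im,
    one_re, one_im]
  ring

lemma norm_sq_blaschkeFactor (ha : a ≠ 0) (h : ‖a‖ * ‖z‖ < 1) :
    ‖blaschkeFactor a z‖ ^ 2 =
      1 - (1 - ‖a‖ ^ 2) * (1 - ‖z‖ ^ 2) / ‖1 - conj a * z‖ ^ 2 := by
  have hden := norm_ne_zero_iff.mpr (one_sub_conj_mul_ne_zero h)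
  rw [norm_blaschkeFactor ha h, ← norm_sq_one_sub_conj_mul_sub, sub_div,
    div_self (pow_ne_zero 2 hden), sub_sub_cancel, div_pow]

lemma norm_blaschkeFactor_le_one (ha : a ≠ 0) (ha1 : ‖a‖ ≤ 1) (hz : ‖z‖ < 1) :
    ‖blaschkeFactor a z‖ ≤ 1 := by
  have hmul : 0 ≤ (1 - ‖a‖ ^ 2) * (1 - ‖z‖ ^ 2) :=
    mul_nonneg (sub_nonneg.mpr (pow_le_one₀ (norm_nonneg a) ha1))
      (sub_nonneg.mpr (pow_le_one₀ (norm_nonneg z) hz.le))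
  rw [← sq_le_one_iff₀ (norm_nonneg _),
    norm_sq_blaschkeFactor ha (mul_lt_one_of_nonneg_of_lt_one_right ha1 (norm_nonneg z) hz)]
  exact sub_le_self 1 (by positivity)

lemma norm_blaschkeFactor_eq_one (ha : a ≠ 0) (ha1 : ‖a‖ ≤ 1) (hz : ‖z‖ = 1) :
    ‖blaschkeFactor a z‖ = 1 := by
  rcases ha1.lt_or_eq with ha1 | ha1
  · rw [← sq_eq_sq₀ (norm_nonneg _) zero_le_one, norm_sq_blaschkeFactor ha (by rwa [hz, mul_one])]
    simp [hz]
  · rw [blaschkeFactor_of_norm_eq_one ha1, norm_one]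

lemma diffContOnCl_blaschkeFactor (ha : a ≠ 0) (ha1 : ‖a‖ ≤ 1) :
    DiffContOnCl ℂ (blaschkeFactor a) (ball 0 1) := by
  rcases ha1.lt_or_eq with ha1 | ha1
  · refine DifferentiableOn.diffContOnCl fun z hz => DifferentiableAt.differentiableWithinAt ?_
    rw [closure_ball _ one_ne_zero, mem_closedBall_zero_iff] at hz
    have hden :=
      one_sub_conj_mul_ne_zero (mul_lt_one_of_nonneg_of_lt_one_left (norm_nonneg a) ha1 hz)
    unfold blaschkeFactor
    fun_prop (disch := exact mul_ne_zero ha hden)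
  · simpa only [funext fun z => blaschkeFactor_of_norm_eq_one (z := z) ha1] using
      diffContOnCl_const

lemma norm_one_sub_blaschkeFactor_le (ha : a ≠ 0) (ha1 : ‖a‖ ≤ 1) (hz : ‖z‖ < 1) :
    ‖1 - blaschkeFactor a z‖ ≤ 2 * (1 - ‖a‖) / (1 - ‖z‖) := by
  have ha0 := norm_pos_iff.mpr ha
  have hnorm : ‖1 - (‖a‖ : ℂ)‖ = 1 - ‖a‖ := by
    rw [← ofReal_one, ← ofReal_sub, norm_real, Real.norm_of_nonneg (sub_nonneg.mpr ha1)]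
  have hnum : ‖a + ‖a‖ * z‖ ≤ ‖a‖ * 2 := by
    refine (norm_add_le _ _).trans ?_
    rw [norm_mul, norm_real, norm_norm]
    nlinarith
  have hden : 1 - ‖z‖ ≤ ‖1 - conj a * z‖ :=
    le_trans (by nlinarith [norm_nonneg z]) (one_sub_norm_mul_norm_le a z)
  calc ‖1 - blaschkeFactor a z‖
      = (1 - ‖a‖) * ‖a + ‖a‖ * z‖ / (‖a‖ * ‖1 - conj a * z‖) := by
        rw [blaschkeFactor, sub_sub_cancel, norm_div, norm_mul, norm_mul, hnorm]
    _ ≤ (1 - ‖a‖) * (‖a‖ * 2) / (‖a‖ * (1 - ‖z‖)) := by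
        gcongr
    _ = 2 * (1 - ‖a‖) / (1 - ‖z‖) := by field_simp

lemma norm_blaschkeFactor_le_exp {t : ℝ} (ha : a ≠ 0) (ha1 : ‖a‖ ≤ 1) (hz : ‖z‖ ≤ t) (ht : t < 1) :
    ‖blaschkeFactor a z‖ ≤ Real.exp (-((1 - t) / 8 * (1 - ‖a‖))) := by
  have hz1 : ‖z‖ < 1 := hz.trans_lt ht
  have hlt := mul_lt_one_of_nonneg_of_lt_one_right ha1 (norm_nonneg z) hz1
  have hden0 : 0 < ‖1 - conj a * z‖ := norm_pos_iff.mpr (one_sub_conj_mul_ne_zero hlt)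
  have hden : ‖1 - conj a * z‖ ^ 2 ≤ 4 := by
    have : ‖1 - conj a * z‖ ≤ 1 + ‖a‖ * ‖z‖ := by simpa using norm_sub_le (1 : ℂ) (conj a * z)
    nlinarith
  have hnum : (1 - ‖a‖) * (1 - t) ≤ (1 - ‖a‖ ^ 2) * (1 - ‖z‖ ^ 2) := by
    have ha2 : 1 - ‖a‖ ≤ 1 - ‖a‖ ^ 2 := by nlinarith [norm_nonneg a]
    exact mul_le_mul ha2 (by nlinarith [norm_nonneg z]) (by linarith) (by linarith)
  have hdefect : (1 - t) / 4 * (1 - ‖a‖) ≤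
      (1 - ‖a‖ ^ 2) * (1 - ‖z‖ ^ 2) / ‖1 - conj a * z‖ ^ 2 := by
    rw [le_div_iff₀ (by positivity)]
    nlinarith [mul_nonneg (sub_nonneg.mpr ha1) (sub_nonneg.mpr ht.le)]
  rw [← sq_le_sq₀ (norm_nonneg _) (Real.exp_pos _).le, norm_sq_blaschkeFactor ha hlt,
    ← Real.exp_nat_mul]
  refine le_trans ?_ (Real.add_one_le_exp _)
  push_cast
  linarith

lemma one_sub_le_norm_sq_blaschkeFactor {t : ℝ} (ha : a ≠ 0) (hat : ‖a‖ ≤ t) (ht : t < 1)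
    (hz : ‖z‖ ≤ 1) : 1 - 2 * (1 - ‖z‖) / (1 - t) ^ 2 ≤ ‖blaschkeFactor a z‖ ^ 2 := by
  have hlt := mul_lt_one_of_nonneg_of_lt_one_left (norm_nonneg a) (hat.trans_lt ht) hz
  have hz0 : 0 ≤ 1 - ‖z‖ := sub_nonneg.mpr hz
  have hden : 1 - t ≤ ‖1 - conj a * z‖ :=
    le_trans (by nlinarith [norm_nonneg a]) (one_sub_norm_mul_norm_le a z)
  have hnum : (1 - ‖a‖ ^ 2) * (1 - ‖z‖ ^ 2) ≤ 2 * (1 - ‖z‖) := by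
    nlinarith [sq_nonneg ‖a‖, norm_nonneg z, mul_nonneg (sq_nonneg ‖a‖) hz0,
      mul_nonneg (mul_nonneg (sq_nonneg ‖a‖) hz0) (norm_nonneg z)]
  rw [norm_sq_blaschkeFactor ha hlt]
  gcongr

end BlaschkeFactor

section BlaschkeProduct

/-- A Blaschke sequence of the disc: points with `∑ (1 - ‖a n‖) < ∞`. Points of the unit circle are
allowed, the corresponding Blaschke factors being identically `1`. -/
structure IsBlaschkeSequence (a : ℕ → ℂ) : Prop where
  ne_zero : ∀ n, a n ≠ 0
  norm_le_one : ∀ n, ‖a n‖ ≤ 1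
  summable : Summable fun n => 1 - ‖a n‖

/-- The infinite product of the normalized Blaschke factors of the points `a n`. -/
def blaschkeProduct (a : ℕ → ℂ) (z : ℂ) : ℂ := ∏' n, blaschkeFactor (a n) z

namespace IsBlaschkeSequence

variable {a : ℕ → ℂ} {z : ℂ}

lemma tail (h : IsBlaschkeSequence a) (N : ℕ) : IsBlaschkeSequence fun n => a (n + N) :=
  ⟨fun _ => h.ne_zero _, fun _ => h.norm_le_one _, (summable_nat_add_iff N).mpr h.summable⟩

lemma summable_norm_one_sub_blaschkeFactor (h : IsBlaschkeSequence a) (hz : ‖z‖ < 1) :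
    Summable fun n => ‖-(1 - blaschkeFactor (a n) z)‖ := by
  refine .of_nonneg_of_le (fun _ => norm_nonneg _) (fun n => ?_)
    ((h.summable.mul_left 2).div_const (1 - ‖z‖))
  rw [norm_neg]
  exact norm_one_sub_blaschkeFactor_le (h.ne_zero n) (h.norm_le_one n) hz

lemma tendsto_blaschkeProduct (h : IsBlaschkeSequence a) (hz : ‖z‖ < 1) :
    Tendsto (fun n => ∏ i ∈ Finset.range n, blaschkeFactor (a i) z) atTop
      (𝓝 (blaschkeProduct a z)) := by
  have hmul := multipliable_one_add_of_summable (h.summable_norm_one_sub_blaschkeFactor hz)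
  simp only [neg_sub, add_sub_cancel] at hmul
  exact hmul.hasProd.tendsto_prod_nat

lemma blaschkeProduct_ne_zero (h : IsBlaschkeSequence a) (hz : ‖z‖ < 1)
    (hne : ∀ n, blaschkeFactor (a n) z ≠ 0) : blaschkeProduct a z ≠ 0 := by
  have := tprod_one_add_ne_zero_of_summable (f := fun n => -(1 - blaschkeFactor (a n) z))
    (fun n => by simpa using hne n) (h.summable_norm_one_sub_blaschkeFactor hz)
  simpa only [blaschkeProduct, neg_sub, add_sub_cancel] using this

lemma norm_blaschkeProduct_le_one (h : IsBlaschkeSequence a) (hz : ‖z‖ < 1) :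
    ‖blaschkeProduct a z‖ ≤ 1 := by
  refine le_of_tendsto' (h.tendsto_blaschkeProduct hz).norm fun n => ?_
  rw [norm_prod]
  exact Finset.prod_le_one (fun _ _ => norm_nonneg _) fun i _ =>
    norm_blaschkeFactor_le_one (h.ne_zero i) (h.norm_le_one i) hz

lemma diffContOnCl_prod (h : IsBlaschkeSequence a) (s : Finset ℕ) :
    DiffContOnCl ℂ (fun z => ∏ i ∈ s, blaschkeFactor (a i) z) (ball 0 1) := by
  have hb (i : ℕ) := diffContOnCl_blaschkeFactor (h.ne_zero i) (h.norm_le_one i)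
  exact ⟨.fun_finsetProd fun i _ => (hb i).differentiableOn,
    continuousOn_finsetProd _ fun i _ => (hb i).continuousOn⟩

lemma norm_prod_eq_one (h : IsBlaschkeSequence a) (s : Finset ℕ) (hz : ‖z‖ = 1) :
    ‖∏ i ∈ s, blaschkeFactor (a i) z‖ = 1 := by
  rw [norm_prod]
  exact Finset.prod_eq_one fun i _ =>
    norm_blaschkeFactor_eq_one (h.ne_zero i) (h.norm_le_one i) hz

lemma hasProdLocallyUniformlyOn (h : IsBlaschkeSequence a) :
    HasProdLocallyUniformlyOn (fun n => blaschkeFactor (a n)) (blaschkeProduct a) (ball 0 1) := by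
  refine hasProdLocallyUniformlyOn_of_forall_compact isOpen_ball fun K hK1 hK => ?_
  obtain ⟨t, ht, hKt⟩ := exists_lt_subset_ball hK.isClosed hK1
  have hbound (n : ℕ) (z : ℂ) (hz : z ∈ K) :
      ‖-(1 - blaschkeFactor (a n) z)‖ ≤ 2 * (1 - ‖a n‖) / (1 - t) := by
    have hzt : ‖z‖ < t := mem_ball_zero_iff.mp (hKt hz)
    have ha := sub_nonneg.mpr (h.norm_le_one n)
    rw [norm_neg]
    refine (norm_one_sub_blaschkeFactor_le (h.ne_zero n) (h.norm_le_one n) (hzt.trans ht)).trans ?_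
    gcongr
  have hcont (n : ℕ) : ContinuousOn (blaschkeFactor (a n)) K :=
    (diffContOnCl_blaschkeFactor (h.ne_zero n) (h.norm_le_one n)).differentiableOn.continuousOn.mono
      hK1
  have := Summable.hasProdUniformlyOn_nat_one_add hK
    ((h.summable.mul_left 2).div_const (1 - t)) (.of_forall hbound)
    fun n => (continuousOn_const.sub (hcont n)).neg
  simp only [neg_sub, add_sub_cancel] at this
  exact this

lemma differentiableOn_blaschkeProduct (h : IsBlaschkeSequence a) :
    DifferentiableOn ℂ (blaschkeProduct a) (ball 0 1) :=
  TendstoLocallyUniformlyOn.differentiableOn h.hasProdLocallyUniformlyOn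
    (.of_forall fun s => (h.diffContOnCl_prod s).differentiableOn) isOpen_ball

end IsBlaschkeSequence

end BlaschkeProduct

section ZeroRemoval

lemma exists_eq_pow_mul_of_differentiableOn_ball {f : ℂ → ℂ}
    (hf : DifferentiableOn ℂ f (ball 0 1)) (hne : ∃ z ∈ ball (0 : ℂ) 1, f z ≠ 0) :
    ∃ (m : ℕ) (g : ℂ → ℂ), DifferentiableOn ℂ g (ball 0 1) ∧ g 0 ≠ 0 ∧ ∀ z, f z = z ^ m * g z := by
  have hmem : ball (0 : ℂ) 1 ∈ 𝓝 0 := ball_mem_nhds _ one_pos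
  have han : AnalyticOnNhd ℂ f (ball 0 1) := hf.analyticOnNhd isOpen_ball
  obtain ⟨P, hP⟩ := han 0 (mem_ball_self one_pos)
  have hP0 : P ≠ 0 := by
    rintro rfl
    obtain ⟨z, hz, hfz⟩ := hne
    exact hfz (han.eqOn_zero_of_preconnected_of_eventuallyEq_zero
      (convex_ball _ _).isPreconnected (mem_ball_self one_pos) hP.eventually_eq_zero hz)
  have hdslope (n : ℕ) :
      DifferentiableOn ℂ ((Function.swap dslope 0)^[n] f) (ball 0 1) := by
    induction n with
    | zero => exact hf
    | succ n ih =>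
      rw [Function.iterate_succ_apply']
      exact (Complex.differentiableOn_dslope hmem).mpr ih
  exact ⟨P.order, _, hdslope _, hP.iterate_dslope_fslope_ne_zero hP0,
    fun z => by simpa using hP.eq_pow_order_mul_iterate_dslope z⟩

lemma exists_isMinOn_norm_of_apply_eq_zero {f : ℂ → ℂ} (hf : ContinuousOn f (ball 0 1)) {w : ℂ}
    (hw : ‖w‖ < 1) (hfw : f w = 0) :
    ∃ a, ‖a‖ < 1 ∧ f a = 0 ∧ ∀ z, ‖z‖ < 1 → f z = 0 → ‖a‖ ≤ ‖z‖ := by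
  have hsub : closedBall (0 : ℂ) ‖w‖ ⊆ ball 0 1 := closedBall_subset_ball hw
  have hK : IsCompact (closedBall (0 : ℂ) ‖w‖ ∩ f ⁻¹' {0}) :=
    (isCompact_closedBall _ _).of_isClosed_subset
      ((hf.mono hsub).preimage_isClosed_of_isClosed isClosed_closedBall isClosed_singleton)
      inter_subset_left
  obtain ⟨a, ⟨haw, hfa⟩, hmin⟩ := hK.exists_isMinOn ⟨w, by simp, hfw⟩ continuous_norm.continuousOn
  rw [mem_closedBall_zero_iff] at haw
  refine ⟨a, haw.trans_lt hw, hfa, fun z _ hfz => ?_⟩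
  rcases le_or_gt ‖z‖ ‖w‖ with hzw | hwz
  · exact hmin ⟨mem_closedBall_zero_iff.mpr hzw, hfz⟩
  · exact haw.trans hwz.le

lemma exists_eq_blaschkeFactor_mul {f : ℂ → ℂ} (hf : DifferentiableOn ℂ f (ball 0 1)) {a : ℂ}
    (ha : a ≠ 0) (ha1 : ‖a‖ < 1) (hfa : f a = 0) :
    ∃ g : ℂ → ℂ, DifferentiableOn ℂ g (ball 0 1) ∧
      ∀ z, ‖z‖ < 1 → f z = blaschkeFactor a z * g z := by
  refine ⟨fun z => -(a / ‖a‖) * (1 - conj a * z) * dslope f a z, ?_, fun z hz => ?_⟩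
  · refine .mul (by fun_prop) ((Complex.differentiableOn_dslope
      (isOpen_ball.mem_nhds (mem_ball_zero_iff.mpr ha1))).mpr hf)
  · have hlt : ‖a‖ * ‖z‖ < 1 := mul_lt_one_of_nonneg_of_lt_one_left (norm_nonneg a) ha1 hz.le
    have hden := one_sub_conj_mul_ne_zero hlt
    have hnorm : (‖a‖ : ℂ) ≠ 0 := ofReal_ne_zero.mpr (norm_ne_zero_iff.mpr ha)
    have hslope : (z - a) * dslope f a z = f z := by simpa [hfa] using sub_smul_dslope f a z
    calc f z = (‖a‖ / a * (a / ‖a‖)) * ((a - z) * ((1 - conj a * z) / (1 - conj a * z))) *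
          -dslope f a z := by
          rw [div_mul_div_cancel₀ ha, div_self hnorm, div_self hden, ← hslope]
          ring
      _ = blaschkeFactor a z * (-(a / ‖a‖) * (1 - conj a * z) * dslope f a z) := by
          rw [blaschkeFactor_eq ha hlt]
          ring

-- The padding point `a = 1` keeps the process going when `f` has no zero left.
lemma exists_remove_zero {f : ℂ → ℂ} (hf : DifferentiableOn ℂ f (ball 0 1)) (hf0 : f 0 ≠ 0) :
    ∃ (a : ℂ) (g : ℂ → ℂ), a ≠ 0 ∧ ‖a‖ ≤ 1 ∧ DifferentiableOn ℂ g (ball 0 1) ∧ g 0 ≠ 0 ∧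
      (∀ z, ‖z‖ < 1 → f z = blaschkeFactor a z * g z) ∧
      ∀ z, ‖z‖ < 1 → f z = 0 → ‖a‖ ≤ ‖z‖ := by
  by_cases hzero : ∃ w, ‖w‖ < 1 ∧ f w = 0
  · obtain ⟨w, hw, hfw⟩ := hzero
    obtain ⟨a, ha1, hfa, hmin⟩ := exists_isMinOn_norm_of_apply_eq_zero hf.continuousOn hw hfw
    have ha : a ≠ 0 := fun h => hf0 (h ▸ hfa)
    obtain ⟨g, hg, hfg⟩ := exists_eq_blaschkeFactor_mul hf ha ha1 hfa
    exact ⟨a, g, ha, ha1.le, hg, right_ne_zero_of_mul (hfg 0 (by simp) ▸ hf0), hfg, hmin⟩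
  · push Not at hzero
    exact ⟨1, f, one_ne_zero, norm_one.le, hf, hf0,
      fun z _ => by rw [blaschkeFactor_of_norm_eq_one norm_one, one_mul],
      fun z hz hfz => absurd hfz (hzero z hz)⟩

/-- The iterated division of the zeros of `F 0` by Blaschke factors: `a n` is a zero of `F n` of
smallest modulus, or a point of the unit circle if `F n` is zero-free. -/
structure IsZeroRemoval (a : ℕ → ℂ) (F : ℕ → ℂ → ℂ) : Prop where
  ne_zero : ∀ n, a n ≠ 0
  norm_le_one : ∀ n, ‖a n‖ ≤ 1
  differentiableOn : ∀ n, DifferentiableOn ℂ (F n) (ball 0 1)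
  apply_zero_ne_zero : ∀ n, F n 0 ≠ 0
  eq_mul : ∀ n z, ‖z‖ < 1 → F n z = blaschkeFactor (a n) z * F (n + 1) z
  norm_le_of_eq_zero : ∀ n z, ‖z‖ < 1 → F n z = 0 → ‖a n‖ ≤ ‖z‖

lemma exists_isZeroRemoval {f : ℂ → ℂ} (hf : DifferentiableOn ℂ f (ball 0 1)) (hf0 : f 0 ≠ 0) :
    ∃ a F, F 0 = f ∧ IsZeroRemoval a F := by
  choose A G hA hA1 hG hG0 heq hmin using
    fun s : {f : ℂ → ℂ // DifferentiableOn ℂ f (ball 0 1) ∧ f 0 ≠ 0} =>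
      exists_remove_zero s.2.1 s.2.2
  let F (n : ℕ) : {f : ℂ → ℂ // DifferentiableOn ℂ f (ball 0 1) ∧ f 0 ≠ 0} :=
    Nat.rec ⟨f, hf, hf0⟩ (fun _ s => ⟨G s, hG s, hG0 s⟩) n
  exact ⟨fun n => A (F n), fun n => (F n).1, rfl, fun _ => hA _, fun _ => hA1 _, fun n => (F n).2.1,
    fun n => (F n).2.2, fun n => heq (F n), fun n => hmin (F n)⟩

namespace IsZeroRemoval

variable {a : ℕ → ℂ} {F : ℕ → ℂ → ℂ} {z : ℂ} {t : ℝ}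

lemma tail (h : IsZeroRemoval a F) (N : ℕ) :
    IsZeroRemoval (fun n => a (n + N)) fun n => F (n + N) where
  ne_zero _ := h.ne_zero _
  norm_le_one _ := h.norm_le_one _
  differentiableOn _ := h.differentiableOn _
  apply_zero_ne_zero _ := h.apply_zero_ne_zero _
  eq_mul n z hz := by simpa only [add_right_comm] using h.eq_mul (n + N) z hz
  norm_le_of_eq_zero _ := h.norm_le_of_eq_zero _

lemma eq_prod_mul (h : IsZeroRemoval a F) (n : ℕ) (hz : ‖z‖ < 1) :
    F 0 z = (∏ i ∈ Finset.range n, blaschkeFactor (a i) z) * F n z := by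
  induction n with
  | zero => simp
  | succ n ih => rw [ih, Finset.prod_range_succ, h.eq_mul n z hz, mul_assoc]

lemma pow_mul_norm_le (h : IsZeroRemoval a F) (hat : ∀ n, ‖a n‖ ≤ t) (ht : t < 1) {ρ s M : ℝ}
    (hρ : 0 < ρ) (hs : 0 < s) (hs1 : s < 1) (hρs : ρ ^ 2 ≤ 1 - 2 * (1 - s) / (1 - t) ^ 2)
    (hM : ∀ z, ‖z‖ = s → ‖F 0 z‖ ≤ M) (n : ℕ) : ρ ^ n * ‖F n 0‖ ≤ M := by
  have hcirc (z : ℂ) (hz : ‖z‖ = s) : ‖F n z‖ ≤ M / ρ ^ n := by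
    have hprod : ρ ^ n ≤ ‖∏ i ∈ Finset.range n, blaschkeFactor (a i) z‖ := by
      calc ρ ^ n = ∏ _i ∈ Finset.range n, ρ := by simp
        _ ≤ ∏ i ∈ Finset.range n, ‖blaschkeFactor (a i) z‖ := by
          refine Finset.prod_le_prod (fun _ _ => hρ.le) fun i _ => ?_
          rw [← sq_le_sq₀ hρ.le (norm_nonneg _)]
          exact hρs.trans (hz ▸ one_sub_le_norm_sq_blaschkeFactor (h.ne_zero i) (hat i) ht
            (hz.trans_le hs1.le))
        _ = ‖∏ i ∈ Finset.range n, blaschkeFactor (a i) z‖ := (norm_prod _ _).symm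
    rw [le_div_iff₀ (by positivity), mul_comm]
    calc ρ ^ n * ‖F n z‖
        ≤ ‖∏ i ∈ Finset.range n, blaschkeFactor (a i) z‖ * ‖F n z‖ := by gcongr
      _ = ‖F 0 z‖ := by rw [← norm_mul, ← h.eq_prod_mul n (hz.trans_lt hs1)]
      _ ≤ M := hM z hz
  rw [← le_div_iff₀' (by positivity)]
  refine norm_le_of_forall_mem_frontier_norm_le (U := ball 0 s) isBounded_ball
    (((h.differentiableOn n).mono ?_).diffContOnCl) ?_ (subset_closure (mem_ball_self hs))
  · rw [closure_ball _ hs.ne']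
    exact closedBall_subset_ball hs1
  · simpa [frontier_ball _ hs.ne'] using hcirc

lemma norm_apply_zero_le (h : IsZeroRemoval a F) (hat : ∀ n, ‖a n‖ ≤ t) (n : ℕ) :
    ‖F 0 0‖ ≤ t ^ n * ‖F n 0‖ := by
  rw [h.eq_prod_mul n (by simp), norm_mul, norm_prod]
  gcongr
  calc ∏ i ∈ Finset.range n, ‖blaschkeFactor (a i) 0‖
      ≤ ∏ _i ∈ Finset.range n, t := Finset.prod_le_prod (fun _ _ => norm_nonneg _) fun i _ => by
        simpa [blaschkeFactor_zero (h.ne_zero i)] using hat i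
    _ = t ^ n := by simp

-- Jensen: `k` zeros in `‖z‖ ≤ t` force `‖F 0 0‖ ≤ (t / ρ) ^ k * M` for every `ρ ∈ (t, 1)`.
lemma exists_forall_norm_le_ne_zero (h : IsZeroRemoval a F) (ht : t < 1) :
    ∃ N, ∀ z, ‖z‖ ≤ t → F N z ≠ 0 := by
  by_contra! hzero
  have hat (n : ℕ) : ‖a n‖ ≤ t := by
    obtain ⟨z, hz, hFz⟩ := hzero n
    exact (h.norm_le_of_eq_zero n z (hz.trans_lt ht) hFz).trans hz
  have ht0 : 0 ≤ t := (norm_nonneg _).trans (hat 0)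
  obtain ⟨ρ, htρ, hρ1⟩ := exists_between ht
  have hρ : 0 < ρ := ht0.trans_lt htρ
  obtain ⟨s, hs, hs1, hρs⟩ : ∃ s : ℝ, 0 < s ∧ s < 1 ∧ ρ ^ 2 ≤ 1 - 2 * (1 - s) / (1 - t) ^ 2 := by
    have hlim : Tendsto (fun s : ℝ => 1 - 2 * (1 - s) / (1 - t) ^ 2) (𝓝[<] 1) (𝓝 1) :=
      tendsto_nhdsWithin_of_tendsto_nhds (Continuous.tendsto' (by fun_prop) _ _ (by simp))
    have hρ2 : ρ ^ 2 < 1 := pow_lt_one₀ hρ.le hρ1 two_ne_zero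
    obtain ⟨s, hs, hρs⟩ := Filter.nonempty_of_mem (inter_mem (Ioo_mem_nhdsLT one_pos)
      (hlim.eventually_const_le hρ2))
    exact ⟨s, hs.1, hs.2, hρs⟩
  obtain ⟨M, hM⟩ := (isCompact_sphere (0 : ℂ) s).exists_bound_of_continuousOn
    ((h.differentiableOn 0).continuousOn.mono (sphere_subset_closedBall.trans
      (closedBall_subset_ball hs1)))
  have hdecay (n : ℕ) : ‖F 0 0‖ ≤ (t / ρ) ^ n * M := by
    calc ‖F 0 0‖ ≤ t ^ n * ‖F n 0‖ := h.norm_apply_zero_le hat n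
      _ = (t / ρ) ^ n * (ρ ^ n * ‖F n 0‖) := by
        rw [div_pow, ← mul_assoc, div_mul_cancel₀ _ (by positivity)]
      _ ≤ (t / ρ) ^ n * M := by
        gcongr
        exact h.pow_mul_norm_le hat ht hρ hs hs1 hρs (fun z hz => hM z (by simpa using hz)) n
  have hlim : Tendsto (fun n : ℕ => (t / ρ) ^ n * M) atTop (𝓝 (0 * M)) :=
    (tendsto_pow_atTop_nhds_zero_of_lt_one (by positivity) ((div_lt_one hρ).mpr htρ)).mul_const M
  exact h.apply_zero_ne_zero 0 (norm_le_zero_iff.mp (zero_mul M ▸ ge_of_tendsto' hlim hdecay))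

lemma exp_mul_norm_le (h : IsZeroRemoval a F) (ht : t < 1) (hz : ‖z‖ ≤ t) (n : ℕ) :
    Real.exp ((1 - t) / 8 * ∑ i ∈ Finset.range n, (1 - ‖a i‖)) * ‖F 0 z‖ ≤ ‖F n z‖ := by
  have hprod : ∏ i ∈ Finset.range n, ‖blaschkeFactor (a i) z‖ ≤
      Real.exp (-((1 - t) / 8 * ∑ i ∈ Finset.range n, (1 - ‖a i‖))) := by
    rw [Finset.mul_sum, ← Finset.sum_neg_distrib, Real.exp_sum]
    exact Finset.prod_le_prod (fun _ _ => norm_nonneg _) fun i _ =>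
      norm_blaschkeFactor_le_exp (h.ne_zero i) (h.norm_le_one i) hz ht
  rw [h.eq_prod_mul n (hz.trans_lt ht), norm_mul, norm_prod, ← mul_assoc]
  refine mul_le_of_le_one_left (norm_nonneg _) ?_
  rwa [Real.exp_neg, ← one_div, le_div_iff₀' (Real.exp_pos _)] at hprod

lemma isBlaschkeSequence (h : IsZeroRemoval a F) (ht0 : 0 ≤ t) (ht : t < 1) {M : ℝ}
    (hM : ∀ n c, (∀ z, ‖z‖ ≤ t → c ≤ ‖F n z‖) → c ≤ M) : IsBlaschkeSequence a := by
  refine ⟨h.ne_zero, h.norm_le_one, ?_⟩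
  obtain ⟨N, hN⟩ := h.exists_forall_norm_le_ne_zero ht
  obtain ⟨y, hy, hmin⟩ := (isCompact_closedBall (0 : ℂ) t).exists_isMinOn
    (nonempty_closedBall.mpr ht0)
    ((h.differentiableOn N).continuousOn.mono (closedBall_subset_ball ht)).norm
  have hc : 0 < ‖F N y‖ := norm_pos_iff.mpr (hN y (mem_closedBall_zero_iff.mp hy))
  have hδ : 0 < (1 - t) / 8 := by linarith
  rw [← summable_nat_add_iff N]
  refine summable_of_sum_range_le (c := M / ‖F N y‖ / ((1 - t) / 8))
    (fun n => sub_nonneg.mpr (h.norm_le_one _)) fun n => ?_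
  have hexp : Real.exp ((1 - t) / 8 * ∑ i ∈ Finset.range n, (1 - ‖a (i + N)‖)) * ‖F N y‖ ≤ M := by
    refine hM (n + N) _ fun z hz => le_trans ?_ ((h.tail N).exp_mul_norm_le ht hz n)
    rw [zero_add]
    gcongr
    exact hmin (mem_closedBall_zero_iff.mpr hz)
  rw [le_div_iff₀' hδ]
  calc (1 - t) / 8 * ∑ i ∈ Finset.range n, (1 - ‖a (i + N)‖)
      ≤ Real.exp ((1 - t) / 8 * ∑ i ∈ Finset.range n, (1 - ‖a (i + N)‖)) := by
        linarith [Real.add_one_le_exp ((1 - t) / 8 * ∑ i ∈ Finset.range n, (1 - ‖a (i + N)‖))]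
    _ ≤ M / ‖F N y‖ := (le_div_iff₀ hc).mpr hexp

lemma tendsto_div_blaschkeProduct (h : IsZeroRemoval a F) (ha : IsBlaschkeSequence a)
    (hz : ‖z‖ < 1) (hFz : F 0 z ≠ 0) : blaschkeProduct a z ≠ 0 ∧
      Tendsto (fun n => F n z) atTop (𝓝 (F 0 z / blaschkeProduct a z)) := by
  have hprod (n : ℕ) : ∏ i ∈ Finset.range n, blaschkeFactor (a i) z ≠ 0 :=
    left_ne_zero_of_mul (h.eq_prod_mul n hz ▸ hFz)
  have hB : blaschkeProduct a z ≠ 0 := ha.blaschkeProduct_ne_zero hz fun n =>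
    Finset.prod_ne_zero_iff.mp (hprod (n + 1)) n (Finset.self_mem_range_succ n)
  refine ⟨hB, (tendsto_const_nhds.div (ha.tendsto_blaschkeProduct hz) hB).congr fun n => ?_⟩
  rw [Pi.div_apply, h.eq_prod_mul n hz, mul_div_cancel_left₀ _ (hprod n)]

lemma exists_tendsto_div_blaschkeProduct (h : IsZeroRemoval a F) (ha : IsBlaschkeSequence a)
    (ht : t < 1) : ∃ N, ∀ z, ‖z‖ ≤ t → F N z ≠ 0 ∧ blaschkeProduct (fun n => a (n + N)) z ≠ 0 ∧
      Tendsto (fun n => F n z) atTop (𝓝 (F N z / blaschkeProduct (fun n => a (n + N)) z)) := by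
  obtain ⟨N, hN⟩ := h.exists_forall_norm_le_ne_zero ht
  refine ⟨N, fun z hz => ⟨hN z hz, ?_⟩⟩
  have htail := (h.tail N).tendsto_div_blaschkeProduct (ha.tail N) (hz.trans_lt ht)
    (by simpa only [zero_add] using hN z hz)
  rwa [tendsto_add_atTop_iff_nat (f := fun n => F n z), zero_add] at htail

lemma exists_tendsto_ne_zero (h : IsZeroRemoval a F) (ha : IsBlaschkeSequence a) :
    ∃ G : ℂ → ℂ, DifferentiableOn ℂ G (ball 0 1) ∧ ∀ z, ‖z‖ < 1 →
      G z ≠ 0 ∧ Tendsto (fun n => F n z) atTop (𝓝 (G z)) ∧ F 0 z = blaschkeProduct a z * G z := by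
  refine ⟨fun z => limUnder atTop fun n => F n z, fun z hz => ?_, fun z hz => ?_⟩
  · obtain ⟨t, hzt, ht⟩ := exists_between (mem_ball_zero_iff.mp hz)
    obtain ⟨N, hN⟩ := h.exists_tendsto_div_blaschkeProduct ha ht
    have hdiff : DifferentiableAt ℂ
        (fun w => F N w / blaschkeProduct (fun n => a (n + N)) w) z :=
      ((h.differentiableOn N).differentiableAt (isOpen_ball.mem_nhds hz)).fun_div
        ((ha.tail N).differentiableOn_blaschkeProduct.differentiableAt (isOpen_ball.mem_nhds hz))
        (hN z hzt.le).2.1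
    refine (hdiff.congr_of_eventuallyEq ?_).differentiableWithinAt
    filter_upwards [isOpen_ball.mem_nhds (mem_ball_zero_iff.mpr hzt)] with w hw
    exact (hN w (mem_ball_zero_iff.mp hw).le).2.2.limUnder_eq
  · obtain ⟨N, hN⟩ := h.exists_tendsto_div_blaschkeProduct ha hz
    obtain ⟨hF, hB, hlim⟩ := hN z le_rfl
    simp only [hlim.limUnder_eq]
    refine ⟨div_ne_zero hF hB, hlim, ?_⟩
    exact tendsto_nhds_unique (tendsto_const_nhds.congr fun n => h.eq_prod_mul n hz)
      ((ha.tendsto_blaschkeProduct hz).mul hlim)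

lemma exists_isCompact_norm_le (h : IsZeroRemoval a F) (m n : ℕ) :
    ∃ L ⊆ ball (0 : ℂ) 1, IsCompact L ∧
      ∀ z ∈ ball (0 : ℂ) 1 \ L, ‖F n z‖ ≤ 2 * ‖z ^ m * F 0 z‖ := by
  let b (z : ℂ) : ℂ := z ^ m * ∏ i ∈ Finset.range n, blaschkeFactor (a i) z
  have hb : ContinuousOn b (closedBall 0 1) :=
    (continuousOn_id.pow m).mul (continuousOn_finsetProd _ fun i _ => by
      simpa only [closure_ball (0 : ℂ) one_ne_zero] using
        (diffContOnCl_blaschkeFactor (h.ne_zero i) (h.norm_le_one i)).continuousOn)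
  have hb1 (z : ℂ) (hz : ‖z‖ = 1) : ‖b z‖ = 1 := by
    rw [norm_mul, norm_pow, hz, one_pow, one_mul, norm_prod]
    exact Finset.prod_eq_one fun i _ =>
      norm_blaschkeFactor_eq_one (h.ne_zero i) (h.norm_le_one i) hz
  refine ⟨closedBall 0 1 ∩ b ⁻¹' closedBall 0 (1 / 2), fun z ⟨hz, hbz⟩ => ?_,
    (isCompact_closedBall _ _).of_isClosed_subset
      (hb.preimage_isClosed_of_isClosed isClosed_closedBall isClosed_closedBall)
      inter_subset_left, fun z ⟨hz, hzL⟩ => ?_⟩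
  · refine mem_ball_zero_iff.mpr ((mem_closedBall_zero_iff.mp hz).lt_of_ne fun hz1 => ?_)
    have := hb1 z hz1 ▸ mem_closedBall_zero_iff.mp hbz
    norm_num at this
  · have hbz : 1 / 2 < ‖b z‖ := by
      by_contra! hbz
      exact hzL ⟨ball_subset_closedBall hz, mem_closedBall_zero_iff.mpr hbz⟩
    rw [h.eq_prod_mul n (mem_ball_zero_iff.mp hz), ← mul_assoc, norm_mul]
    nlinarith [norm_nonneg (F n z)]

end IsZeroRemoval

end ZeroRemoval

/-! ### Fatou's theorem for bounded holomorphic functions -/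

section FatouTheorem

lemma norm_circleAverage_le_of_norm_le {f : ℂ → ℂ} {g : ℂ → ℝ} {c : ℂ} {R : ℝ}
    (hg : CircleIntegrable g c R) (h : ∀ z ∈ sphere c |R|, ‖f z‖ ≤ g z) :
    ‖circleAverage f c R‖ ≤ circleAverage g c R := by
  rw [Real.circleAverage_def, Real.circleAverage_def, norm_smul, smul_eq_mul,
    Real.norm_of_nonneg (inv_nonneg.2 Real.two_pi_pos.le)]
  gcongr
  exact intervalIntegral.norm_integral_le_of_norm_le Real.two_pi_pos.le
    (ae_of_all _ fun θ _ => h _ (circleMap_mem_sphere' c R θ)) hg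

lemma circleAverage_div_sub_sq (z : ℂ) :
    circleAverage (fun ζ => ζ / (ζ - z) ^ 2) 0 1 = 0 := by
  rw [Real.circleAverage_eq_circleIntegral one_ne_zero]
  have h : ∮ ζ in C(0, 1), (ζ - 0)⁻¹ • (ζ / (ζ - z) ^ 2) = ∮ ζ in C(0, 1), (ζ - z) ^ (-2 : ℤ) :=
    circleIntegral.integral_congr zero_le_one fun ζ hζ => by
      have : ζ ≠ 0 := ne_of_mem_sphere hζ one_ne_zero
      simp only [sub_zero, smul_eq_mul, zpow_neg]
      field_simp
  rw [h, circleIntegral.integral_sub_zpow_of_ne (by norm_num), smul_zero]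

lemma sub_ne_zero_of_mem_sphere {z ζ : ℂ} (hz : ‖z‖ < 1) (hζ : ζ ∈ sphere (0 : ℂ) 1) :
    ζ - z ≠ 0 := by
  rw [sub_ne_zero]
  rintro rfl
  exact hz.ne (mem_sphere_zero_iff_norm.1 hζ)

lemma circleAverage_div_sub_sq_mul {Φ : ℂ → ℂ} (hΦ : DiffContOnCl ℂ Φ (ball 0 1)) {z : ℂ}
    (hz : ‖z‖ < 1) : circleAverage (fun ζ => ζ / (ζ - z) ^ 2 * Φ ζ) 0 1 = deriv Φ z := by
  have hzb : ball (0 : ℂ) 1 ∈ 𝓝 z := isOpen_ball.mem_nhds (mem_ball_zero_iff.2 hz)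
  have hq : DiffContOnCl ℂ (dslope Φ z) (ball 0 1) := by
    refine ⟨(differentiableOn_dslope hzb).2 hΦ.1, ?_⟩
    exact (continuousOn_dslope (mem_of_superset hzb subset_closure)).2
      ⟨hΦ.2, hΦ.1.differentiableAt hzb⟩
  have hcont : ContinuousOn Φ (sphere 0 1) := hΦ.continuousOn_ball.mono sphere_subset_closedBall
  have hne : ∀ ζ ∈ sphere (0 : ℂ) 1, (ζ - z) ^ 2 ≠ 0 := fun ζ hζ =>
    pow_ne_zero 2 (sub_ne_zero_of_mem_sphere hz hζ)
  calc circleAverage (fun ζ => ζ / (ζ - z) ^ 2 * Φ ζ) 0 1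
      = circleAverage (fun ζ => ζ / (ζ - z) ^ 2 * Φ ζ) 0 1
          - circleAverage (fun ζ => Φ z • (ζ / (ζ - z) ^ 2)) 0 1 := by
        rw [Real.circleAverage_fun_smul, circleAverage_div_sub_sq, smul_zero, sub_zero]
    _ = circleAverage (fun ζ => (ζ - 0) / (ζ - z) * dslope Φ z ζ) 0 1 := by
        rw [← Real.circleAverage_fun_sub
          (ContinuousOn.circleIntegrable zero_le_one (by fun_prop (disch := assumption)))
          (ContinuousOn.circleIntegrable zero_le_one (by fun_prop (disch := assumption)))]
        refine Real.circleAverage_congr_sphere fun ζ hζ => ?_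
        have h := sub_ne_zero_of_mem_sphere hz (by simpa only [abs_one] using hζ)
        simp only [smul_eq_mul, sub_zero]
        rw [dslope_of_ne _ (sub_ne_zero.1 h), slope_def_field]
        field_simp
    _ = deriv Φ z := by
        rw [← dslope_same]
        have h1 : ball (0 : ℂ) |1| = ball 0 1 := by rw [abs_one]
        exact (h1 ▸ hq).circleAverage_smul_div (h1 ▸ mem_ball_zero_iff.2 hz)

lemma circleAverage_div_one_sub_conj_sq_mul {Φ : ℂ → ℂ} (hΦ : DiffContOnCl ℂ Φ (ball 0 1))
    {z : ℂ} (hz : ‖z‖ < 1) :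
    circleAverage (fun ζ => conj z ^ 2 * ζ / (1 - conj z * ζ) ^ 2 * Φ ζ) 0 1 = 0 := by
  have hd : DiffContOnCl ℂ (fun ζ => conj z ^ 2 * ζ / (1 - conj z * ζ) ^ 2) (ball 0 1) := by
    refine DifferentiableOn.diffContOnCl fun ζ hζ => ?_
    rw [closure_ball _ one_ne_zero, mem_closedBall_zero_iff] at hζ
    have h : 1 - conj z * ζ ≠ 0 := one_sub_conj_mul_ne_zero (by nlinarith [norm_nonneg z])
    fun_prop (disch := exact pow_ne_zero 2 h)
  have h1 : ball (0 : ℂ) |1| = ball 0 1 := by rw [abs_one]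
  exact (h1 ▸ hd.smul hΦ).circleAverage.trans (by simp)

lemma circleAverage_poissonKernel {z : ℂ} (hz : ‖z‖ < 1) :
    circleAverage (poissonKernel 0 z) 0 1 = 1 := by
  have h := InnerProductSpace.HarmonicContOnCl.circleAverage_poissonKernel_smul
    (InnerProductSpace.harmonicContOnCl_const (c := (1 : ℝ))) (mem_ball_zero_iff.2 hz)
  rwa [show poissonKernel 0 z • (fun _ => (1 : ℝ)) = poissonKernel 0 z from mul_one _] at h

lemma poissonKernel_mul_norm_sub_sq {z ζ : ℂ} (hz : ‖z‖ < 1) (hζ : ‖ζ‖ = 1) :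
    poissonKernel 0 z ζ * ‖ζ - z‖ ^ 2 = 1 - ‖z‖ ^ 2 := by
  have := sub_ne_zero_of_mem_sphere hz (mem_sphere_zero_iff_norm.2 hζ)
  simp [poissonKernel_def, hζ, this]

lemma continuousOn_poissonKernel {z : ℂ} (hz : ‖z‖ < 1) :
    ContinuousOn (poissonKernel 0 z) (sphere 0 1) := by
  have hne : ∀ ζ ∈ sphere (0 : ℂ) 1, ‖ζ - z‖ ^ 2 ≠ 0 := fun ζ hζ =>
    pow_ne_zero 2 (norm_ne_zero_iff.2 (sub_ne_zero_of_mem_sphere hz hζ))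
  unfold poissonKernel
  simp only [sub_zero]
  fun_prop (disch := assumption)

/-- Integrating against this kernel over the unit circle recovers `deriv Φ z` from the boundary
values of `Φ`. The second term integrates to zero against holomorphic functions; it makes the
kernel decay like the Poisson kernel. -/
def derivKernel (z ζ : ℂ) : ℂ := ζ / (ζ - z) ^ 2 - conj z ^ 2 * ζ / (1 - conj z * ζ) ^ 2

lemma circleAverage_derivKernel_mul {Φ : ℂ → ℂ} (hΦ : DiffContOnCl ℂ Φ (ball 0 1)) {z : ℂ}
    (hz : ‖z‖ < 1) : circleAverage (fun ζ => derivKernel z ζ * Φ ζ) 0 1 = deriv Φ z := by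
  have hcont : ContinuousOn Φ (sphere 0 1) := hΦ.continuousOn_ball.mono sphere_subset_closedBall
  have hne₁ : ∀ ζ ∈ sphere (0 : ℂ) 1, (ζ - z) ^ 2 ≠ 0 := fun ζ hζ =>
    pow_ne_zero 2 (sub_ne_zero_of_mem_sphere hz hζ)
  have hne₂ : ∀ ζ ∈ sphere (0 : ℂ) 1, (1 - conj z * ζ) ^ 2 ≠ 0 := fun ζ hζ =>
    pow_ne_zero 2 (one_sub_conj_mul_ne_zero (by rwa [mem_sphere_zero_iff_norm.1 hζ, mul_one]))
  simp only [derivKernel, sub_mul]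
  rw [Real.circleAverage_fun_sub
      (ContinuousOn.circleIntegrable zero_le_one (by fun_prop (disch := assumption)))
      (ContinuousOn.circleIntegrable zero_le_one (by fun_prop (disch := assumption))),
    circleAverage_div_sub_sq_mul hΦ hz, circleAverage_div_one_sub_conj_sq_mul hΦ hz, sub_zero]

lemma derivKernel_eq {z ζ : ℂ} (hz : ‖z‖ < 1) (hζ : ‖ζ‖ = 1) :
    derivKernel z ζ = ((1 - ‖z‖ ^ 2 : ℝ) : ℂ) * (ζ * conj (ζ - z) - conj z * (ζ - z)) /
      (ζ * (ζ - z) ^ 2 * conj (ζ - z) ^ 2) := by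
  have hsub := sub_ne_zero_of_mem_sphere hz (mem_sphere_zero_iff_norm.2 hζ)
  have hconj : conj (ζ - z) ≠ 0 := (map_ne_zero _).2 hsub
  have hζ0 : ζ ≠ 0 := norm_ne_zero_iff.1 (hζ ▸ one_ne_zero)
  have hden : ζ * conj (ζ - z) = 1 - conj z * ζ := by
    rw [map_sub, mul_sub, mul_conj', hζ]
    push_cast
    ring
  have hadd : ((1 - ‖z‖ ^ 2 : ℝ) : ℂ) = ζ * conj (ζ - z) + conj z * (ζ - z) := by
    rw [hden]
    push_cast
    rw [← mul_conj']
    ring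
  rw [derivKernel, ← hden, hadd]
  field_simp
  ring

lemma norm_derivKernel_mul_norm_sub_le {z ζ : ℂ} (hz : ‖z‖ < 1) (hζ : ‖ζ‖ = 1) :
    ‖derivKernel z ζ‖ * ‖ζ - z‖ ≤ 2 * poissonKernel 0 z ζ := by
  have hsub := norm_pos_iff.2 (sub_ne_zero_of_mem_sphere hz (mem_sphere_zero_iff_norm.2 hζ))
  have hsq : 0 ≤ 1 - ‖z‖ ^ 2 := sub_nonneg.2 (pow_le_one₀ (norm_nonneg z) hz.le)
  have hnum : ‖ζ * conj (ζ - z) - conj z * (ζ - z)‖ ≤ 2 * ‖ζ - z‖ :=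
    calc ‖ζ * conj (ζ - z) - conj z * (ζ - z)‖
        ≤ ‖ζ - z‖ + ‖z‖ * ‖ζ - z‖ := by
          refine (norm_sub_le _ _).trans_eq ?_
          rw [norm_mul, norm_mul, norm_conj, norm_conj, hζ, one_mul]
      _ ≤ 2 * ‖ζ - z‖ := by nlinarith
  have hkernel : ‖derivKernel z ζ‖ * ‖ζ - z‖ ^ 4 =
      (1 - ‖z‖ ^ 2) * ‖ζ * conj (ζ - z) - conj z * (ζ - z)‖ := by
    rw [derivKernel_eq hz hζ, norm_div, norm_mul, norm_real, Real.norm_of_nonneg hsq]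
    simp only [norm_mul, norm_pow, norm_conj, hζ]
    field_simp
  rw [← mul_le_mul_iff_left₀ (pow_pos hsub 3)]
  calc ‖derivKernel z ζ‖ * ‖ζ - z‖ * ‖ζ - z‖ ^ 3
      = ‖derivKernel z ζ‖ * ‖ζ - z‖ ^ 4 := by ring
    _ ≤ (1 - ‖z‖ ^ 2) * (2 * ‖ζ - z‖) := by
        rw [hkernel]
        gcongr
    _ = 2 * poissonKernel 0 z ζ * ‖ζ - z‖ ^ 3 := by
        rw [← poissonKernel_mul_norm_sub_sq hz hζ]
        ring

lemma norm_deriv_le_of_norm_le_sphere {Φ : ℂ → ℂ} (hΦ : DiffContOnCl ℂ Φ (ball 0 1))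
    {z ξ : ℂ} (hz : ‖z‖ < 1) {ε K M : ℝ} (hε : 0 ≤ ε) (hK : 0 ≤ K)
    (hM0 : 0 ≤ M) (hM : ∀ ζ ∈ sphere (0 : ℂ) 1, ‖ζ - ξ‖ ≤ M * ‖ζ - z‖)
    (hb : ∀ ζ ∈ sphere (0 : ℂ) 1, ‖Φ ζ‖ ≤ ε * ‖ζ - ξ‖ + K * ‖ζ - ξ‖ ^ 3) :
    ‖deriv Φ z‖ ≤ 2 * (ε * M + K * M ^ 3 * (1 - ‖z‖ ^ 2)) := by
  have hint : CircleIntegrable (poissonKernel 0 z) 0 1 :=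
    (continuousOn_poissonKernel hz).circleIntegrable zero_le_one
  have hbound : ∀ ζ ∈ sphere (0 : ℂ) |1|, ‖derivKernel z ζ * Φ ζ‖ ≤
      2 * ε * M * poissonKernel 0 z ζ + 2 * K * M ^ 3 * (1 - ‖z‖ ^ 2) := by
    intro ζ hζ
    rw [abs_one] at hζ
    have hk := norm_derivKernel_mul_norm_sub_le hz (mem_sphere_zero_iff_norm.1 hζ)
    calc ‖derivKernel z ζ * Φ ζ‖
        ≤ ‖derivKernel z ζ‖ * (ε * (M * ‖ζ - z‖) + K * (M * ‖ζ - z‖) ^ 3) := by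
          rw [norm_mul]
          gcongr
          exact (hb ζ hζ).trans (by gcongr <;> exact hM ζ hζ)
      _ = ‖derivKernel z ζ‖ * ‖ζ - z‖ * (ε * M + K * M ^ 3 * ‖ζ - z‖ ^ 2) := by ring
      _ ≤ 2 * poissonKernel 0 z ζ * (ε * M + K * M ^ 3 * ‖ζ - z‖ ^ 2) := by
          gcongr
      _ = 2 * ε * M * poissonKernel 0 z ζ + 2 * K * M ^ 3 * (1 - ‖z‖ ^ 2) := by
          rw [← poissonKernel_mul_norm_sub_sq hz (mem_sphere_zero_iff_norm.1 hζ)]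
          ring
  calc ‖deriv Φ z‖ = ‖circleAverage (fun ζ => derivKernel z ζ * Φ ζ) 0 1‖ := by
        rw [circleAverage_derivKernel_mul hΦ hz]
    _ ≤ circleAverage ((2 * ε * M) • poissonKernel 0 z
          + fun _ => 2 * K * M ^ 3 * (1 - ‖z‖ ^ 2)) 0 1 :=
        norm_circleAverage_le_of_norm_le (hint.const_smul.add (circleIntegrable_const _ _ _)) hbound
    _ = 2 * (ε * M + K * M ^ 3 * (1 - ‖z‖ ^ 2)) := by
        rw [Real.circleAverage_add hint.const_smul (circleIntegrable_const _ _ _),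
          Real.circleAverage_smul, circleAverage_poissonKernel hz, Real.circleAverage_const,
          smul_eq_mul]
        ring

lemma dist_le_of_dist_le_mul_infDist {S : Set ℂ} {z ζ ξ : ℂ} {C : ℝ} (hC : 0 ≤ C) (hζ : ζ ∈ S)
    (hz : dist z ξ ≤ C * infDist z S) : dist ζ ξ ≤ (C + 1) * dist ζ z :=
  calc dist ζ ξ ≤ dist ζ z + dist z ξ := dist_triangle _ _ _
    _ ≤ dist ζ z + C * dist z ζ := by
      gcongr
      exact hz.trans (by gcongr; exact infDist_le_dist_of_mem hζ)
    _ = (C + 1) * dist ζ z := by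
      rw [dist_comm z ζ]
      ring

lemma exists_norm_sub_le_cube_of_hasDerivWithinAt {Φ : ℂ → ℂ} {S : Set ℂ} {ξ L : ℂ}
    (hb : Bornology.IsBounded (Φ '' S)) (hS : Bornology.IsBounded S)
    (hΦ : HasDerivWithinAt Φ L S ξ) {ε : ℝ} (hε : 0 < ε) :
    ∃ K, 0 ≤ K ∧ ∀ ζ ∈ S, ‖Φ ζ - Φ ξ - L * (ζ - ξ)‖ ≤ ε * ‖ζ - ξ‖ + K * ‖ζ - ξ‖ ^ 3 := by
  obtain ⟨δ, hδ, hnear⟩ := Metric.mem_nhdsWithin_iff.1 (hΦ.isLittleO.def hε)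
  obtain ⟨A, hA⟩ := isBounded_iff_forall_norm_le.1 hb
  obtain ⟨B, hB⟩ := isBounded_iff_forall_norm_le.1 hS
  have hfar : ∀ ζ ∈ S, ‖Φ ζ - Φ ξ - L * (ζ - ξ)‖ ≤
      max 0 (A + ‖Φ ξ‖ + ‖L‖ * (B + ‖ξ‖)) := fun ζ hζ => by
    refine le_max_of_le_right ?_
    calc ‖Φ ζ - Φ ξ - L * (ζ - ξ)‖ ≤ ‖Φ ζ‖ + ‖Φ ξ‖ + ‖L‖ * (‖ζ‖ + ‖ξ‖) := by
          refine (norm_sub_le _ _).trans ?_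
          rw [norm_mul]
          gcongr <;> exact norm_sub_le _ _
      _ ≤ _ := by
          gcongr
          exacts [hA _ (mem_image_of_mem Φ hζ), hB ζ hζ]
  set N := max 0 (A + ‖Φ ξ‖ + ‖L‖ * (B + ‖ξ‖))
  refine ⟨N / δ ^ 3, div_nonneg (le_max_left _ _) (by positivity), fun ζ hζ => ?_⟩
  rcases lt_or_ge (dist ζ ξ) δ with hlt | hge
  · have h : ‖_‖ ≤ _ := hnear ⟨hlt, hζ⟩
    rw [smul_eq_mul, mul_comm (ζ - ξ)] at h
    exact h.trans (le_add_of_nonneg_right (by positivity))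
  · rw [dist_eq_norm] at hge
    calc ‖Φ ζ - Φ ξ - L * (ζ - ξ)‖ ≤ N := hfar ζ hζ
      _ = N / δ ^ 3 * δ ^ 3 := (div_mul_cancel₀ _ (by positivity)).symm
      _ ≤ N / δ ^ 3 * ‖ζ - ξ‖ ^ 3 := by gcongr
      _ ≤ _ := le_add_of_nonneg_left (by positivity)

lemma nTLim_deriv_of_hasDerivWithinAt {Φ : ℂ → ℂ} (hΦ : DiffContOnCl ℂ Φ (ball 0 1)) {ξ L : ℂ}
    (hξ : ‖ξ‖ = 1) (hL : HasDerivWithinAt Φ L (sphere 0 1) ξ) :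
    NTLim (ball 0 1) (deriv Φ) ξ L := by
  intro C hC
  rw [Metric.tendsto_nhds]
  intro η hη
  have hcont : ContinuousOn Φ (sphere 0 1) := hΦ.continuousOn_ball.mono sphere_subset_closedBall
  obtain ⟨K, hK, hbound⟩ := exists_norm_sub_le_cube_of_hasDerivWithinAt
    ((isCompact_sphere 0 1).image_of_continuousOn hcont).isBounded isBounded_sphere hL
    (ε := η / (4 * (C + 1))) (by positivity)
  have hd : DiffContOnCl ℂ (fun ζ => Φ ζ - Φ ξ - L * (ζ - ξ)) (ball 0 1) :=
    (hΦ.sub_const _).sub (Differentiable.diffContOnCl (by fun_prop))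
  have hlim : Tendsto (fun z : ℂ => 2 * (K * (C + 1) ^ 3 * (1 - ‖z‖ ^ 2)))
      (𝓝[{z | z ∈ ball 0 1 ∧ dist z ξ ≤ C * infDist z (frontier (ball 0 1))}] ξ) (𝓝 0) := by
    refine tendsto_nhdsWithin_of_tendsto_nhds (Continuous.tendsto' (by fun_prop) _ _ ?_)
    rw [hξ]
    norm_num
  filter_upwards [self_mem_nhdsWithin, hlim.eventually_lt_const (half_pos hη)] with z hz hsmall
  have hz1 : ‖z‖ < 1 := mem_ball_zero_iff.1 hz.1
  have hM : ∀ ζ ∈ sphere (0 : ℂ) 1, ‖ζ - ξ‖ ≤ (C + 1) * ‖ζ - z‖ := fun ζ hζ => by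
    rw [← frontier_ball _ one_ne_zero] at hζ
    simpa only [dist_eq_norm] using dist_le_of_dist_le_mul_infDist (by positivity) hζ hz.2
  have hderiv : deriv (fun ζ => Φ ζ - Φ ξ - L * (ζ - ξ)) z = deriv Φ z - L := by
    have hz' := (hΦ.1.differentiableAt (isOpen_ball.mem_nhds hz.1)).hasDerivAt
    have hlin : HasDerivAt (fun ζ => L * (ζ - ξ)) L z := by
      simpa using ((hasDerivAt_id z).sub_const ξ).const_mul L
    exact ((hz'.sub_const (Φ ξ)).sub hlin).deriv
  rw [dist_eq_norm, ← hderiv]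
  calc _ ≤ 2 * (η / (4 * (C + 1)) * (C + 1) + K * (C + 1) ^ 3 * (1 - ‖z‖ ^ 2)) :=
        norm_deriv_le_of_norm_le_sphere hd hz1 (by positivity) hK (by positivity) hM hbound
    _ = η / 2 + 2 * (K * (C + 1) ^ 3 * (1 - ‖z‖ ^ 2)) := by
        field_simp
        ring
    _ < η := by linarith

lemma circleMap_add_arg_div {θ : ℝ} {ζ : ℂ} (hζ : ζ ∈ sphere (0 : ℂ) 1) :
    circleMap 0 1 (θ + arg (ζ / circleMap 0 1 θ)) = ζ := by
  have hξ : circleMap 0 1 θ ≠ 0 := circleMap_ne_center one_ne_zero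
  have hnorm : ‖ζ / circleMap 0 1 θ‖ = 1 := by simp [mem_sphere_zero_iff_norm.1 hζ]
  calc circleMap 0 1 (θ + arg (ζ / circleMap 0 1 θ))
      = circleMap 0 1 θ * (‖ζ / circleMap 0 1 θ‖ * cexp (arg (ζ / circleMap 0 1 θ) * I)) := by
        rw [hnorm]
        simp only [circleMap_zero, ofReal_add, add_mul, Complex.exp_add, ofReal_one, one_mul]
    _ = ζ := by rw [norm_mul_exp_arg_mul_I, mul_div_cancel₀ _ hξ]

lemma tendsto_add_arg_div (θ : ℝ) :
    Tendsto (fun ζ => θ + arg (ζ / circleMap 0 1 θ)) (𝓝 (circleMap 0 1 θ)) (𝓝 θ) := by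
  have hξ : circleMap 0 1 θ ≠ 0 := circleMap_ne_center one_ne_zero
  have hcont : ContinuousAt (fun ζ => θ + arg (ζ / circleMap 0 1 θ)) (circleMap 0 1 θ) := by
    have harg := continuousAt_arg (x := circleMap 0 1 θ / circleMap 0 1 θ)
      (by rw [div_self hξ]; exact one_mem_slitPlane)
    exact continuousAt_const.add (harg.comp (f := (· / circleMap 0 1 θ)) (by fun_prop))
  simpa [ContinuousAt, div_self hξ] using hcont

lemma hasDerivWithinAt_sphere_of_comp_circleMap {Φ : ℂ → ℂ} {θ : ℝ} {D : ℂ}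
    (h : HasDerivAt (fun t : ℝ => Φ (circleMap 0 1 t)) D θ) :
    HasDerivWithinAt Φ (D / (circleMap 0 1 θ * I)) (sphere 0 1) (circleMap 0 1 θ) := by
  have hξ : circleMap 0 1 θ ≠ 0 := circleMap_ne_center one_ne_zero
  have hquot : Tendsto (fun t => slope Φ (circleMap 0 1 θ) (circleMap 0 1 t)) (𝓝[≠] θ)
      (𝓝 (D / (circleMap 0 1 θ * I))) := by
    refine ((hasDerivAt_iff_tendsto_slope.1 h).div
      (hasDerivAt_iff_tendsto_slope.1 (hasDerivAt_circleMap 0 1 θ))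
      (mul_ne_zero hξ I_ne_zero)).congr' ?_
    filter_upwards [self_mem_nhdsWithin] with t ht
    have hne : ((t : ℂ) - θ) ≠ 0 := sub_ne_zero.2 (ofReal_injective.ne ht)
    simp only [Pi.div_apply, slope_def_module, real_smul, smul_eq_mul, ofReal_inv, ofReal_sub]
    rw [mul_div_mul_left _ _ (inv_ne_zero hne), div_eq_inv_mul]
  rw [hasDerivWithinAt_iff_tendsto_slope]
  have hangle : Tendsto (fun ζ => θ + arg (ζ / circleMap 0 1 θ))
      (𝓝[sphere 0 1 \ {circleMap 0 1 θ}] circleMap 0 1 θ) (𝓝[≠] θ) := by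
    refine tendsto_nhdsWithin_iff.2 ⟨(tendsto_add_arg_div θ).mono_left nhdsWithin_le_nhds, ?_⟩
    filter_upwards [self_mem_nhdsWithin] with ζ hζ heq
    exact hζ.2 (by rw [← circleMap_add_arg_div (θ := θ) hζ.1, heq]; rfl)
  refine (hquot.comp hangle).congr' ?_
  filter_upwards [self_mem_nhdsWithin] with ζ hζ
  simp only [Function.comp_apply, circleMap_add_arg_div hζ.1]

-- A primitive of `f` is Lipschitz, so by Rademacher its boundary values are differentiable a.e.; at
-- such a point the boundary derivative is the nontangential limit of the derivative `f`.
lemma ae_exists_nTLim {f : ℂ → ℂ} {M : ℝ} (hf : DifferentiableOn ℂ f (ball 0 1))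
    (hM : ∀ z ∈ ball (0 : ℂ) 1, ‖f z‖ ≤ M) :
    ∀ᵐ θ : ℝ, ∃ L, NTLim (ball 0 1) f (circleMap 0 1 θ) L := by
  obtain ⟨g, -, hg⟩ := hf.isExactOn_ball.with_val_at 0 0
  have hlip : LipschitzOnWith M.toNNReal g (ball 0 1) := by
    refine Convex.lipschitzOnWith_of_nnnorm_deriv_le (𝕜 := ℂ)
      (fun z hz => (hg z hz).differentiableAt) (fun z hz => ?_) (convex_ball 0 1)
    rw [(hg z hz).deriv, ← norm_toNNReal]
    exact Real.toNNReal_le_toNNReal (hM z hz)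
  obtain ⟨Φ, hΦ, hEq⟩ := hlip.extend_finite_dimension
  have hd : ∀ z ∈ ball (0 : ℂ) 1, HasDerivAt Φ (f z) z := fun z hz =>
    (hg z hz).congr_of_eventuallyEq (hEq.symm.eventuallyEq_of_mem (isOpen_ball.mem_nhds hz))
  have hΦd : DiffContOnCl ℂ Φ (ball 0 1) :=
    ⟨fun z hz => (hd z hz).differentiableAt.differentiableWithinAt, hΦ.continuous.continuousOn⟩
  filter_upwards [(hΦ.comp (lipschitzWith_circleMap 0 1)).ae_differentiableAt_real] with θ hθ
  have hL := hasDerivWithinAt_sphere_of_comp_circleMap hθ.hasDerivAt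
  refine ⟨_, fun C hC => (nTLim_deriv_of_hasDerivWithinAt hΦd (by simp) hL C hC).congr' ?_⟩
  filter_upwards [self_mem_nhdsWithin] with z hz using (hd z hz.1).deriv

lemma NTLim.tendsto_radial {f : ℂ → ℂ} {ξ L : ℂ} (h : NTLim (ball 0 1) f ξ L) (hξ : ‖ξ‖ = 1) :
    Tendsto (fun r : ℝ => f (r * ξ)) (𝓝[<] 1) (𝓝 L) := by
  refine (h 2 one_lt_two).comp (tendsto_nhdsWithin_iff.2 ⟨?_, ?_⟩)
  · exact tendsto_nhdsWithin_of_tendsto_nhds (Continuous.tendsto' (by fun_prop) _ _ (by simp))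
  · filter_upwards [Ioo_mem_nhdsLT zero_lt_one] with r hr
    have hnorm : ‖(r : ℂ) * ξ‖ = r := by rw [norm_mul, hξ, Complex.norm_of_nonneg hr.1.le, mul_one]
    have hdist : dist ((r : ℂ) * ξ) ξ = 1 - r := by
      rw [dist_eq_norm, ← sub_one_mul, norm_mul, hξ, mul_one, norm_sub_rev, ← ofReal_one,
        ← ofReal_sub, Complex.norm_of_nonneg (sub_nonneg.2 hr.2.le)]
    have hinf : 1 - r ≤ infDist ((r : ℂ) * ξ) (frontier (ball 0 1)) := by
      rw [frontier_ball _ one_ne_zero]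
      refine (le_infDist ⟨ξ, mem_sphere_zero_iff_norm.2 hξ⟩).2 fun ζ hζ => ?_
      rw [dist_comm, dist_eq_norm, ← mem_sphere_zero_iff_norm.1 hζ]
      simpa only [hnorm] using norm_sub_norm_le ζ (r * ξ)
    refine ⟨mem_ball_zero_iff.2 (hnorm.trans_lt hr.2), ?_⟩
    rw [hdist]
    linarith [hr.2]

lemma circleAverage_comp_ofReal_mul {f : ℂ → ℂ} (hf : DifferentiableOn ℂ f (ball 0 1)) {r : ℝ}
    (hr0 : 0 ≤ r) (hr1 : r < 1) : circleAverage (fun ζ => f (r * ζ)) 0 1 = f 0 := by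
  have hmaps : MapsTo (fun ζ : ℂ => r * ζ) (closedBall 0 1) (ball 0 1) := fun ζ hζ => by
    rw [mem_ball_zero_iff, norm_mul, Complex.norm_of_nonneg hr0]
    nlinarith [mem_closedBall_zero_iff.1 hζ, norm_nonneg ζ]
  have hd : DiffContOnCl ℂ (fun ζ => f (r * ζ)) (ball 0 |1|) := by
    rw [abs_one]
    refine DifferentiableOn.diffContOnCl ?_
    rw [closure_ball _ one_ne_zero]
    exact hf.comp (by fun_prop) hmaps
  rw [hd.circleAverage, mul_zero]

lemma norm_apply_zero_le_integral_norm_of_radial {f : ℂ → ℂ}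
    (hf : DifferentiableOn ℂ f (ball 0 1)) {M : ℝ} (hM : ∀ z ∈ ball (0 : ℂ) 1, ‖f z‖ ≤ M)
    {L : ℝ → ℂ} (hL : ∀ᵐ θ : ℝ, Tendsto (fun r : ℝ => f (r * circleMap 0 1 θ)) (𝓝[<] 1) (𝓝 (L θ))) :
    2 * π * ‖f 0‖ ≤ ∫ θ in 0..2 * π, ‖L θ‖ := by
  have hmem : ∀ᶠ r : ℝ in 𝓝[<] 1, ∀ θ, ↑r * circleMap 0 1 θ ∈ ball (0 : ℂ) 1 := by
    filter_upwards [Ioo_mem_nhdsLT zero_lt_one] with r hr θ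
    simpa [abs_of_pos hr.1] using hr.2
  have hlim : Tendsto (fun r : ℝ => ∫ θ in 0..2 * π, f (r * circleMap 0 1 θ)) (𝓝[<] 1)
      (𝓝 (∫ θ in 0..2 * π, L θ)) := by
    refine intervalIntegral.tendsto_integral_filter_of_dominated_convergence (fun _ => M) ?_ ?_
      intervalIntegrable_const ?_
    · filter_upwards [hmem] with r hr
      exact (hf.continuousOn.comp_continuous (by fun_prop) hr).aestronglyMeasurable
    · filter_upwards [hmem] with r hr using ae_of_all _ fun θ _ => hM _ (hr θ)
    · filter_upwards [hL] with θ hθ _ using hθ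
  have hconst : ∀ᶠ r : ℝ in 𝓝[<] 1, ∫ θ in 0..2 * π, f (r * circleMap 0 1 θ) = 2 * π * f 0 := by
    filter_upwards [Ioo_mem_nhdsLT zero_lt_one] with r hr
    rw [← circleAverage_comp_ofReal_mul hf hr.1.le hr.2, Real.circleAverage_def, real_smul]
    have := Real.pi_pos.ne'
    push_cast
    field_simp
  have hint := tendsto_nhds_unique hlim (tendsto_const_nhds.congr' (hconst.mono fun _ => Eq.symm))
  calc 2 * π * ‖f 0‖ = ‖∫ θ in 0..2 * π, L θ‖ := by
        rw [hint]
        simp [abs_of_pos Real.pi_pos]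
    _ ≤ ∫ θ in 0..2 * π, ‖L θ‖ :=
      intervalIntegral.norm_integral_le_integral_norm Real.two_pi_pos.le

lemma aestronglyMeasurable_of_radial {f : ℂ → ℂ} (hf : ContinuousOn f (ball 0 1)) {L : ℝ → ℂ}
    (hL : ∀ᵐ θ : ℝ, Tendsto (fun r : ℝ => f (r * circleMap 0 1 θ)) (𝓝[<] 1) (𝓝 (L θ))) :
    AEStronglyMeasurable L := by
  obtain ⟨r, -, hr, hr1⟩ := exists_seq_strictMono_tendsto' (zero_lt_one' ℝ)
  refine aestronglyMeasurable_of_tendsto_ae atTop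
    (f := fun n θ => f (r n * circleMap 0 1 θ)) (fun n => ?_) ?_
  · refine (hf.comp_continuous (by fun_prop) fun θ => ?_).aestronglyMeasurable
    simpa [abs_of_pos (hr n).1] using (hr n).2
  · filter_upwards [hL] with θ hθ
    exact hθ.comp (tendsto_nhdsWithin_iff.2 ⟨hr1, .of_forall fun n => (hr n).2⟩)

namespace IsBlaschkeSequence

variable {a : ℕ → ℂ}

lemma prod_mul_blaschkeProduct_tail (h : IsBlaschkeSequence a) {z : ℂ} (hz : ‖z‖ < 1) (N : ℕ) :
    (∏ i ∈ Finset.range N, blaschkeFactor (a i) z) * blaschkeProduct (fun n => a (n + N)) z =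
      blaschkeProduct a z := by
  refine tendsto_nhds_unique (((h.tail N).tendsto_blaschkeProduct hz).const_mul _) ?_
  refine ((tendsto_add_atTop_iff_nat N).2 (h.tendsto_blaschkeProduct hz)).congr fun n => ?_
  rw [add_comm, Finset.prod_range_add]
  simp only [add_comm]

lemma tendsto_blaschkeProduct_tail (h : IsBlaschkeSequence a) :
    Tendsto (fun N => blaschkeProduct (fun n => a (n + N)) 0) atTop (𝓝 1) := by
  have hz : ‖(0 : ℂ)‖ < 1 := by simp
  have hfactor (n : ℕ) : blaschkeFactor (a n) 0 ≠ 0 := by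
    rw [blaschkeFactor_zero (h.ne_zero n)]
    exact_mod_cast norm_ne_zero_iff.2 (h.ne_zero n)
  have hB := h.blaschkeProduct_ne_zero hz hfactor
  rw [← div_self hB]
  refine (tendsto_const_nhds.div (h.tendsto_blaschkeProduct hz) hB).congr fun N => ?_
  rw [Pi.div_apply, ← h.prod_mul_blaschkeProduct_tail hz N,
    mul_div_cancel_left₀ _ (Finset.prod_ne_zero_iff.2 fun n _ => hfactor n)]

lemma norm_blaschkeProduct_tail_zero_le (h : IsBlaschkeSequence a) {L : ℝ → ℂ}
    (hL : ∀ᵐ θ : ℝ,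
      Tendsto (fun r : ℝ => blaschkeProduct a (r * circleMap 0 1 θ)) (𝓝[<] 1) (𝓝 (L θ))) (N : ℕ) :
    2 * π * ‖blaschkeProduct (fun n => a (n + N)) 0‖ ≤ ∫ θ in 0..2 * π, ‖L θ‖ := by
  set P : ℂ → ℂ := fun z => ∏ i ∈ Finset.range N, blaschkeFactor (a i) z
  have hP (θ : ℝ) : ‖P (circleMap 0 1 θ)‖ = 1 := h.norm_prod_eq_one _ (by simp)
  have hPlim (θ : ℝ) :
      Tendsto (fun r : ℝ => P (r * circleMap 0 1 θ)) (𝓝[<] 1) (𝓝 (P (circleMap 0 1 θ))) := by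
    have hcont : ContinuousWithinAt P (closedBall 0 1) (circleMap 0 1 θ) :=
      (h.diffContOnCl_prod _).continuousOn_ball _ (by simp)
    refine hcont.tendsto.comp (tendsto_nhdsWithin_iff.2 ⟨?_, ?_⟩)
    · exact tendsto_nhdsWithin_of_tendsto_nhds (Continuous.tendsto' (by fun_prop) _ _ (by simp))
    · filter_upwards [Ioo_mem_nhdsLT zero_lt_one] with r hr
      simpa [abs_of_pos hr.1] using hr.2.le
  have hlim : ∀ᵐ θ : ℝ, Tendsto
      (fun r : ℝ => blaschkeProduct (fun n => a (n + N)) (r * circleMap 0 1 θ)) (𝓝[<] 1)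
      (𝓝 (L θ / P (circleMap 0 1 θ))) := by
    filter_upwards [hL] with θ hθ
    have hP0 : P (circleMap 0 1 θ) ≠ 0 := norm_ne_zero_iff.1 ((hP θ).trans_ne one_ne_zero)
    refine (hθ.div (hPlim θ) hP0).congr' ?_
    filter_upwards [(hPlim θ).eventually_ne hP0, Ioo_mem_nhdsLT zero_lt_one] with r hr0 hr
    have hz : ‖r * circleMap 0 1 θ‖ < 1 := by simpa [abs_of_pos hr.1] using hr.2
    rw [Pi.div_apply, ← h.prod_mul_blaschkeProduct_tail hz N, mul_div_cancel_left₀ _ hr0]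
  simpa [hP] using norm_apply_zero_le_integral_norm_of_radial
    (h.tail N).differentiableOn_blaschkeProduct
    (fun z hz => (h.tail N).norm_blaschkeProduct_le_one (mem_ball_zero_iff.1 hz)) hlim

-- The tails of the product have the same boundary modulus as the whole product, and their values at
-- the origin tend to `1`; hence the mean of the boundary modulus is `1`.
lemma ae_exists_nTLim_blaschkeProduct (h : IsBlaschkeSequence a) :
    ∀ᵐ θ ∂volume.restrict (Ioc 0 (2 * π)),
      ∃ L, NTLim (ball 0 1) (blaschkeProduct a) (circleMap 0 1 θ) L ∧ ‖L‖ = 1 := by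
  have hle (z : ℂ) (hz : z ∈ ball (0 : ℂ) 1) : ‖blaschkeProduct a z‖ ≤ 1 :=
    h.norm_blaschkeProduct_le_one (mem_ball_zero_iff.1 hz)
  obtain ⟨L, hL⟩ := Filter.skolem.1 (ae_exists_nTLim h.differentiableOn_blaschkeProduct hle)
  have hrad : ∀ᵐ θ : ℝ, Tendsto (fun r : ℝ => blaschkeProduct a (r * circleMap 0 1 θ)) (𝓝[<] 1)
      (𝓝 (L θ)) := hL.mono fun θ hθ => hθ.tendsto_radial (by simp)
  have hL1 : ∀ᵐ θ : ℝ, ‖L θ‖ ≤ 1 := by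
    filter_upwards [hrad] with θ hθ
    have hev : ∀ᶠ r : ℝ in 𝓝[<] 1, ‖blaschkeProduct a (r * circleMap 0 1 θ)‖ ≤ 1 := by
      filter_upwards [Ioo_mem_nhdsLT zero_lt_one] with r hr
      exact hle _ (by simpa [abs_of_pos hr.1] using hr.2)
    exact le_of_tendsto hθ.norm hev
  have hint : IntegrableOn (fun θ => ‖L θ‖) (Ioc 0 (2 * π)) := by
    have hmeas :=
      aestronglyMeasurable_of_radial h.differentiableOn_blaschkeProduct.continuousOn hrad
    refine Measure.integrableOn_of_bounded (M := 1) measure_Ioc_lt_top.ne hmeas.norm ?_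
    simpa only [norm_norm] using ae_restrict_of_ae hL1
  have hmass : 2 * π ≤ ∫ θ in 0..2 * π, ‖L θ‖ := by
    have htail := h.tendsto_blaschkeProduct_tail.norm.const_mul (2 * π)
    rw [norm_one, mul_one] at htail
    exact le_of_tendsto' htail (h.norm_blaschkeProduct_tail_zero_le hrad)
  have hae : ∀ᵐ θ ∂volume.restrict (Ioc 0 (2 * π)), ‖L θ‖ = 1 := by
    have hle1 : (fun θ => ‖L θ‖) ≤ᵐ[volume.restrict (Ioc 0 (2 * π))] fun _ => 1 :=
      ae_restrict_of_ae hL1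
    refine (integral_eq_iff_of_ae_le hint (integrable_const _) hle1).1
      ((integral_mono_ae hint (integrable_const _) hle1).antisymm ?_)
    simpa [intervalIntegral.integral_of_le Real.two_pi_pos.le, Real.pi_pos.le] using hmass
  filter_upwards [hae, ae_restrict_of_ae hL] with θ hθ hLθ using ⟨L θ, hLθ, hθ⟩

end IsBlaschkeSequence

end FatouTheorem

/-! ### Inner-outer factorization -/

section ConformalInverse

variable {U : Set ℂ} {ψ : ℂ → ℂ}

lemma not_eqOn_const_of_injOn (hU : IsOpen U) (hne : U.Nonempty) (hi : InjOn ψ U) (c : ℂ) :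
    ¬ ∀ z ∈ U, ψ z = c := by
  intro hc
  obtain ⟨z, hz⟩ := hne
  refine infinite_of_mem_nhds z (hU.mem_nhds hz) (Set.Subsingleton.finite fun x hx y hy => ?_)
  exact hi hx hy ((hc x hx).trans (hc y hy).symm)

lemma isOpen_image_of_differentiableOn_of_injOn (hU : IsOpen U) (hUc : IsPreconnected U)
    (hd : DifferentiableOn ℂ ψ U) (hi : InjOn ψ U) {s : Set ℂ} (hsU : s ⊆ U) (hs : IsOpen s) :
    IsOpen (ψ '' s) := by
  rcases s.eq_empty_or_nonempty with rfl | hne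
  · simp
  rcases (hd.analyticOnNhd hU).is_constant_or_isOpen hUc with ⟨c, hc⟩ | hopen
  · exact absurd hc (not_eqOn_const_of_injOn hU (hne.mono hsU) hi c)
  · exact hopen s hsU hs

lemma continuousAt_invFunOn (hU : IsOpen U) (hUc : IsPreconnected U)
    (hd : DifferentiableOn ℂ ψ U) (hi : InjOn ψ U) {w : ℂ} (hw : w ∈ U) :
    ContinuousAt (Function.invFunOn ψ U) (ψ w) := by
  rw [ContinuousAt, hi.leftInvOn_invFunOn hw, _root_.tendsto_nhds]
  intro s hs hws
  have hopen := isOpen_image_of_differentiableOn_of_injOn hU hUc hd hi inter_subset_right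
    (hs.inter hU)
  filter_upwards [hopen.mem_nhds ⟨w, ⟨hws, hw⟩, rfl⟩]
  rintro _ ⟨x, ⟨hxs, hxU⟩, rfl⟩
  rwa [mem_preimage, hi.leftInvOn_invFunOn hxU]

lemma eventually_deriv_ne_zero_of_injOn (hU : IsOpen U) (hUc : IsPreconnected U)
    (hd : DifferentiableOn ℂ ψ U) (hi : InjOn ψ U) {w : ℂ} (hw : w ∈ U) :
    ∀ᶠ x in 𝓝[≠] w, deriv ψ x ≠ 0 := by
  have hderiv : AnalyticOnNhd ℂ (deriv ψ) U := (hd.analyticOnNhd hU).deriv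
  refine (hderiv w hw).eventually_eq_zero_or_eventually_ne_zero.resolve_left fun h0 => ?_
  have hzero := hderiv.eqOn_zero_of_preconnected_of_eventuallyEq_zero hUc hw h0
  exact not_eqOn_const_of_injOn hU ⟨w, hw⟩ hi (ψ w) fun x hx =>
    hU.is_const_of_deriv_eq_zero hUc hd hzero hx hw

-- Critical values are isolated and the inverse is continuous there, so they are removable.
lemma differentiableOn_invFunOn (hU : IsOpen U) (hUc : IsPreconnected U)
    (hd : DifferentiableOn ℂ ψ U) (hi : InjOn ψ U) :
    DifferentiableOn ℂ (Function.invFunOn ψ U) (ψ '' U) := by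
  have hleft : LeftInvOn (Function.invFunOn ψ U) ψ U := hi.leftInvOn_invFunOn
  have himage : IsOpen (ψ '' U) :=
    isOpen_image_of_differentiableOn_of_injOn hU hUc hd hi Subset.rfl hU
  have hregular (x : ℂ) (hx : x ∈ U) (h0 : deriv ψ x ≠ 0) :
      DifferentiableAt ℂ (Function.invFunOn ψ U) (ψ x) := by
    refine (HasDerivAt.of_local_left_inverse (f := ψ) (continuousAt_invFunOn hU hUc hd hi hx) ?_ h0
      ?_).differentiableAt
    · rw [hleft hx]
      exact (hd.differentiableAt (hU.mem_nhds hx)).hasDerivAt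
    · filter_upwards [himage.mem_nhds (mem_image_of_mem ψ hx)]
      rintro _ ⟨y, hy, rfl⟩
      rw [hleft hy]
  rintro _ ⟨w, hw, rfl⟩
  have hcont := continuousAt_invFunOn hU hUc hd hi hw
  have hpunctured : ∀ᶠ z in 𝓝 (ψ w),
      z ≠ ψ w → DifferentiableAt ℂ (Function.invFunOn ψ U) z := by
    have hev := eventually_nhdsWithin_iff.1 (eventually_deriv_ne_zero_of_injOn hU hUc hd hi hw)
    rw [ContinuousAt, hleft hw] at hcont
    filter_upwards [hcont.eventually hev, himage.mem_nhds (mem_image_of_mem ψ hw)]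
    rintro _ hne ⟨x, hx, rfl⟩ hxw
    rw [hleft hx] at hne
    exact hregular x hx (hne fun h => hxw (congrArg ψ h))
  have hremovable := (differentiableOn_compl_singleton_and_continuousAt_iff hpunctured).1
    ⟨fun z hz => (hz.1 hz.2).differentiableWithinAt, hcont⟩
  exact (hremovable.differentiableAt hpunctured).differentiableWithinAt

end ConformalInverse

lemma exists_differentiableOn_exp_eq {U : Set ℂ} (hU : IsOpen U) (hUc : IsSimplyConnected U)
    {G : ℂ → ℂ} (hG : DifferentiableOn ℂ G U) (h0 : ∀ z ∈ U, G z ≠ 0) :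
    ∃ g, DifferentiableOn ℂ g U ∧ ∀ z ∈ U, G z = exp (g z) := by
  obtain ⟨g, hgc, hg⟩ := exists_continuousOn_eqOn_exp_comp hUc hU hG.continuousOn
    (by rintro ⟨z, hz, hz0⟩; exact h0 z hz hz0)
  refine ⟨g, fun z hz => DifferentiableAt.differentiableWithinAt ?_, fun z hz => (hg hz).symm⟩
  have hdiff : DifferentiableAt ℂ (fun w => g z + log (G w / G z)) z := by
    have hd := (hG.differentiableAt (hU.mem_nhds hz)).div_const (G z)
    exact (hd.clog (by simp [h0 z hz])).const_add _
  refine hdiff.congr_of_eventuallyEq ?_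
  have him : Tendsto (fun w => (g w - g z).im) (𝓝 z) (𝓝 0) := by
    have hcont := (hgc.continuousAt (hU.mem_nhds hz)).tendsto.sub_const (g z)
    rw [sub_self] at hcont
    exact (continuous_im.tendsto 0).comp hcont
  filter_upwards [hU.mem_nhds hz, him.eventually (Ioo_mem_nhds (neg_lt_zero.2 Real.pi_pos)
    Real.pi_pos)] with w hw hlt
  rw [← hg hw, ← hg hz, Function.comp_apply, Function.comp_apply, ← exp_sub,
    log_exp hlt.1 hlt.2.le, add_sub_cancel]

lemma ae_arcLen_of_ae_circleMap {P : ℂ → Prop}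
    (h : ∀ᵐ θ ∂volume.restrict (Ioc 0 (2 * π)), P (circleMap 0 1 θ)) :
    ∀ᵐ ξ ∂arcLen (ball (0 : ℂ) 1), P ξ := by
  rw [ae_restrict_iff' measurableSet_Ioc, ae_iff] at h
  rw [arcLen, frontier_ball (0 : ℂ) one_ne_zero, ae_restrict_iff' isClosed_sphere.measurableSet,
    ae_iff]
  set S := {θ | ¬(θ ∈ Ioc 0 (2 * π) → P (circleMap 0 1 θ))}
  have himage : μH[1] (circleMap 0 1 '' S) = 0 := by
    have hle := (lipschitzWith_circleMap 0 1).hausdorffMeasure_image_le zero_le_one S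
    rwa [hausdorffMeasure_real, h, mul_zero, nonpos_iff_eq_zero] at hle
  refine measure_mono_null (fun ξ hξ => ?_) himage
  obtain ⟨hξ1, hξP⟩ := Classical.not_imp.1 hξ
  rw [← abs_one (α := ℝ), ← image_circleMap_Ioc] at hξ1
  obtain ⟨θ, hθ, rfl⟩ := hξ1
  exact ⟨θ, fun hP => hξP (hP hθ), rfl⟩

lemma NTLim.mul_of_continuousAt {Ω : Set ℂ} {f g : ℂ → ℂ} {ξ L : ℂ} (h : NTLim Ω f ξ L)
    (hg : ContinuousAt g ξ) : NTLim Ω (fun z => g z * f z) ξ (g ξ * L) :=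
  fun C hC => (hg.tendsto.mono_left nhdsWithin_le_nhds).mul (h C hC)

lemma NTLim.congr {Ω : Set ℂ} {f g : ℂ → ℂ} {ξ L : ℂ} (h : NTLim Ω f ξ L) (hfg : EqOn f g Ω) :
    NTLim Ω g ξ L :=
  fun C hC => (h C hC).congr' (by filter_upwards [self_mem_nhdsWithin] with z hz using hfg hz.1)

namespace IsConformalOnto

variable {Ω : Set ℂ} {ψ : ℂ → ℂ}

lemma mapsTo (h : IsConformalOnto ψ Ω) : MapsTo ψ (ball 0 1) Ω := h.2.2.1 ▸ mapsTo_image ψ _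

lemma nonempty (h : IsConformalOnto ψ Ω) : Ω.Nonempty := ⟨ψ 0, h.mapsTo (by simp)⟩

lemma isOpen (h : IsConformalOnto ψ Ω) : IsOpen Ω :=
  h.2.2.1 ▸ isOpen_image_of_differentiableOn_of_injOn isOpen_ball
    (convex_ball _ _).isPreconnected h.1 h.2.1 Subset.rfl isOpen_ball

lemma exists_inverse (h : IsConformalOnto ψ Ω) :
    ∃ τ, DifferentiableOn ℂ τ Ω ∧ MapsTo τ Ω (ball 0 1) ∧ LeftInvOn τ ψ (ball 0 1) ∧
      LeftInvOn ψ τ Ω := by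
  obtain ⟨hd, hi, rfl, -⟩ := h
  refine ⟨Function.invFunOn ψ (ball 0 1),
    differentiableOn_invFunOn isOpen_ball (convex_ball _ _).isPreconnected hd hi, ?_,
    hi.leftInvOn_invFunOn, ?_⟩
  · rintro _ ⟨w, hw, rfl⟩
    rwa [hi.leftInvOn_invFunOn hw]
  · rintro _ ⟨w, hw, rfl⟩
    rw [hi.leftInvOn_invFunOn hw]

end IsConformalOnto

section Factorization

variable {Ω : Set ℂ} {ψ τ : ℂ → ℂ} {a : ℕ → ℂ}

lemma IsBlaschkeSequence.omegaInner_pow_mul_comp (h : IsBlaschkeSequence a) (m : ℕ)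
    (hτ : DifferentiableOn ℂ τ Ω) (hτΩ : MapsTo τ Ω (ball 0 1))
    (hτψ : LeftInvOn τ ψ (ball 0 1)) :
    OmegaInner Ω ψ fun z => τ z ^ m * blaschkeProduct a (τ z) := by
  refine ⟨(hτ.pow m).mul (h.differentiableOn_blaschkeProduct.comp hτ hτΩ), ?_⟩
  refine ae_arcLen_of_ae_circleMap (h.ae_exists_nTLim_blaschkeProduct.mono ?_)
  rintro θ ⟨L, hL, hL1⟩
  refine ⟨circleMap 0 1 θ ^ m * L,
    (hL.mul_of_continuousAt (continuous_pow m).continuousAt).congr fun w hw => ?_, ?_⟩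
  · simp only [Function.comp_apply, hτψ hw]
  · simp [hL1]

variable {u : ℂ → ℝ} {ν : Measure ℂ} {μ : ℝ → Measure ℂ} {F : ℕ → ℂ → ℂ} {f : ℂ → ℂ} {p : ℝ}

lemma IsPSFamily.psNormPow_zeroRemoval_le (h : IsPSFamily Ω u ν μ) (hψ : IsConformalOnto ψ Ω)
    (hτΩ : MapsTo τ Ω (ball 0 1)) (hψτ : LeftInvOn ψ τ Ω) (hF : IsZeroRemoval a F) (hp : 0 ≤ p)
    {m : ℕ} (hfac : ∀ z ∈ Ω, f z = τ z ^ m * F 0 (τ z)) (n : ℕ) :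
    psNormPow p μ (fun z => F n (τ z)) ≤ ENNReal.ofReal (2 ^ p) * psNormPow p μ f := by
  obtain ⟨L, hL, hLc, hle⟩ := hF.exists_isCompact_norm_le m n
  rw [← psNormPow_const_mul zero_le_two]
  refine h.psNormPow_mono_of_norm_le hψ.nonempty (hLc.image_of_continuousOn
    (hψ.1.continuousOn.mono hL)) (hψ.mapsTo.mono_left hL).image_subset fun z hz hzL => ?_
  have hτL : τ z ∉ L := fun hmem => hzL ⟨τ z, hmem, hψτ hz⟩
  have hbound := hle (τ z) ⟨hτΩ hz, hτL⟩
  rw [← hfac z hz] at hbound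
  refine Real.rpow_le_rpow (norm_nonneg _) ?_ hp
  simpa using hbound

lemma IsPSFamily.isBlaschkeSequence_of_psNormPow_le (h : IsPSFamily Ω u ν μ) (hΩ : Ω.Nonempty)
    (hτ : DifferentiableOn ℂ τ Ω) (hτΩ : MapsTo τ Ω (ball 0 1)) (hF : IsZeroRemoval a F)
    (hp : 0 < p) {M : ℝ≥0∞} (hM : M ≠ ⊤) (hle : ∀ n, psNormPow p μ (fun z => F n (τ z)) ≤ M) :
    IsBlaschkeSequence a := by
  obtain ⟨K, δ, hK, hKΩ, hδ, hKδ⟩ := h.exists_isCompact_rpow_mul_le_psNormPow hΩ hp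
  obtain ⟨t, ht, htK⟩ := exists_pos_lt_subset_ball one_pos
    (hK.image_of_continuousOn (hτ.continuousOn.mono hKΩ)).isClosed (hτΩ.mono_left hKΩ).image_subset
  refine hF.isBlaschkeSequence ht.1.le ht.2 (M := (M / δ).toReal ^ p⁻¹) fun n c hc => ?_
  rcases lt_or_ge c 0 with hc0 | hc0
  · exact hc0.le.trans (by positivity)
  have hcF : ENNReal.ofReal (c ^ p) * δ ≤ M :=
    (hKδ _ ((hF.differentiableOn n).comp hτ hτΩ) c hc0 fun z hz =>
      hc _ (mem_ball_zero_iff.1 (htK ⟨z, hz, rfl⟩)).le).trans (hle n)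
  have hdiv : M / δ ≠ ⊤ := ENNReal.div_ne_top hM hδ.ne'
  rw [Real.le_rpow_inv_iff_of_pos hc0 ENNReal.toReal_nonneg hp,
    ← ENNReal.ofReal_le_iff_le_toReal hdiv, ENNReal.le_div_iff_mul_le (.inl hδ.ne') (.inr hM)]
  exact hcF

lemma IsPSFamily.exists_inner_mul_exp (h : IsPSFamily Ω u ν μ) (hψ : IsConformalOnto ψ Ω)
    (hp : 0 < p) (hf : MemPS p Ω μ f) (hf0 : ∃ z ∈ Ω, f z ≠ 0) :
    ∃ I g : ℂ → ℂ, OmegaInner Ω ψ I ∧ (∀ z ∈ Ω, ‖I z‖ ≤ 1) ∧ DifferentiableOn ℂ g Ω ∧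
      psNormPow p μ (fun z => exp (g z)) < ⊤ ∧ ∀ z ∈ Ω, f z = I z * exp (g z) := by
  obtain ⟨τ, hτ, hτΩ, hτψ, hψτ⟩ := hψ.exists_inverse
  have hfψ0 : ∃ w ∈ ball (0 : ℂ) 1, (f ∘ ψ) w ≠ 0 := by
    obtain ⟨z, hz, hfz⟩ := hf0
    exact ⟨τ z, hτΩ hz, by rwa [Function.comp_apply, hψτ hz]⟩
  obtain ⟨m, f₀, hf₀, hf₀0, hfψ⟩ := exists_eq_pow_mul_of_differentiableOn_ball
    (hf.1.comp hψ.1 hψ.mapsTo) hfψ0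
  obtain ⟨a, F, rfl, hF⟩ := exists_isZeroRemoval hf₀ hf₀0
  have hfac (z : ℂ) (hz : z ∈ Ω) : f z = τ z ^ m * F 0 (τ z) := by
    rw [← hfψ, Function.comp_apply, hψτ hz]
  have hbound := h.psNormPow_zeroRemoval_le hψ hτΩ hψτ hF hp.le hfac
  have hM : ENNReal.ofReal (2 ^ p) * psNormPow p μ f < ⊤ :=
    ENNReal.mul_lt_top ENNReal.ofReal_lt_top hf.2
  have ha := h.isBlaschkeSequence_of_psNormPow_le hψ.nonempty hτ hτΩ hF hp hM.ne hbound
  obtain ⟨G, hG, hGlim⟩ := hF.exists_tendsto_ne_zero ha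
  have hnorm (z : ℂ) (hz : z ∈ Ω) : ‖τ z‖ < 1 := mem_ball_zero_iff.1 (hτΩ hz)
  have hball : IsSimplyConnected (ball (0 : ℂ) 1) := by
    have := (convex_ball (0 : ℂ) 1).contractibleSpace ⟨0, by simp⟩
    exact SimplyConnectedSpace.ofContractible _
  obtain ⟨g, hg, hGg⟩ := exists_differentiableOn_exp_eq isOpen_ball hball hG fun z hz =>
    (hGlim z (mem_ball_zero_iff.1 hz)).1
  refine ⟨_, fun z => g (τ z), ha.omegaInner_pow_mul_comp m hτ hτΩ hτψ, fun z hz => ?_,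
    hg.comp hτ hτΩ, lt_of_le_of_lt ?_ hM, fun z hz => ?_⟩
  · rw [norm_mul, norm_pow]
    exact mul_le_one₀ (pow_le_one₀ (norm_nonneg _) (hnorm z hz).le) (norm_nonneg _)
      (ha.norm_blaschkeProduct_le_one (hnorm z hz))
  · refine h.psNormPow_le_of_tendsto hψ.nonempty hp
      (fun n => (hF.differentiableOn n).comp hτ hτΩ) (fun z hz => ?_) hbound
    rw [← hGg _ (hτΩ hz)]
    exact (hGlim _ (hnorm z hz)).2.1
  · rw [hfac z hz, (hGlim _ (hnorm z hz)).2.2, hGg _ (hτΩ hz), mul_assoc]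

end Factorization

lemma norm_exp_half_mul_rpow_two (p : ℝ) (w : ℂ) : ‖exp (p / 2 * w)‖ ^ (2 : ℝ) = ‖exp w‖ ^ p := by
  rw [norm_exp, norm_exp, ← Real.exp_mul, ← Real.exp_mul]
  congr 1
  rw [← ofReal_ofNat, ← ofReal_div, re_ofReal_mul]
  ring

theorem stmt12_general (Ω : Set ℂ)
    (u : ℂ → ℝ) (hu : IsExhaustion u Ω)
    (ν : Measure ℂ) (hν : IsRieszMeasure u Ω ν) (hfin : FiniteOnCompactsIn ν Ω)
    (μfam : ℝ → Measure ℂ) (hμ : ∀ r : ℝ, r < 0 → IsMAMeasure u Ω ν r (μfam r))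
    (ψ : ℂ → ℂ) (hψ : IsConformalOnto ψ Ω)
    (p : ℝ) (hp : 0 < p)
    (f : ℂ → ℂ) (hf : MemPS p Ω μfam f) (hf0 : ∃ z ∈ Ω, f z ≠ 0) :
    (∃ I h g : ℂ → ℂ,
      OmegaInner Ω ψ I ∧
      MemPS 2 Ω μfam h ∧ (∀ z ∈ Ω, h z ≠ 0) ∧
      DifferentiableOn ℂ g Ω ∧
      (∀ z ∈ Ω, h z = Complex.exp (((p:ℂ)/2) * g z)) ∧
      (∀ z ∈ Ω, f z = I z * Complex.exp (g z))) ∧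
    (p = 1 → ∃ g h : ℂ → ℂ,
      MemPS 2 Ω μfam g ∧ MemPS 2 Ω μfam h ∧ ∀ z ∈ Ω, f z = g z * h z) := by
  have hfam : IsPSFamily Ω u ν μfam := ⟨hψ.isOpen, hu, hν, hfin, hμ⟩
  obtain ⟨I, g, hI, hI1, hg, hexp, hfac⟩ := hfam.exists_inner_mul_exp hψ hp hf hf0
  have hdiff : DifferentiableOn ℂ (fun z => exp (p / 2 * g z)) Ω := (hg.const_mul _).cexp
  have hmem {φ : ℂ → ℂ} (hφ : DifferentiableOn ℂ φ Ω)
      (hle : ∀ z ∈ Ω, ‖φ z‖ ≤ ‖exp (p / 2 * g z)‖) : MemPS 2 Ω μfam φ := by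
    refine ⟨hφ, (hfam.psNormPow_mono_of_norm_le hψ.nonempty isCompact_empty (empty_subset _)
      fun z hz _ => ?_).trans_lt hexp⟩
    rw [← norm_exp_half_mul_rpow_two]
    exact Real.rpow_le_rpow (norm_nonneg _) (hle z hz) zero_le_two
  refine ⟨⟨I, fun z => exp (p / 2 * g z), g, hI, hmem hdiff fun _ _ => le_rfl,
    fun z _ => exp_ne_zero _, hg, fun _ _ => rfl, hfac⟩, ?_⟩
  rintro rfl
  refine ⟨fun z => I z * exp ((1 : ℝ) / 2 * g z), fun z => exp ((1 : ℝ) / 2 * g z),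
    hmem (hI.1.mul hdiff) fun z hz => ?_, hmem hdiff fun _ _ => le_rfl, fun z hz => ?_⟩
  · rw [norm_mul]
    exact mul_le_of_le_one_left (norm_nonneg _) (hI1 z hz)
  · rw [hfac z hz, mul_assoc, ← exp_add]
    push_cast
    ring_nf

/-- For `f ∈ H^p_u(Ω)`, `f ≢ 0`, there are an `Ω`-inner `I` and a
zero-free `h ∈ H²_u(Ω)` with `f = I·h^{2/p}` (the power taken via a holomorphic
logarithm `g`, `h = exp((p/2)g)` and `h^{2/p} = exp g`). In particular for `p = 1`,
`f` is a product of two functions in `H²_u(Ω)`. -/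
theorem stmt12 (Ω : Set ℂ) (hΩ : AnalyticJordanDomain Ω)
    (u : ℂ → ℝ) (hu : IsExhaustion u Ω)
    (ν : Measure ℂ) (hν : IsRieszMeasure u Ω ν) (hfin : ν Set.univ < ⊤)
    (μfam : ℝ → Measure ℂ) (hμ : ∀ r : ℝ, r < 0 → IsMAMeasure u Ω ν r (μfam r))
    (ψ : ℂ → ℂ) (hψ : IsConformalOnto ψ Ω)
    (p : ℝ) (hp : 1 ≤ p)
    (f : ℂ → ℂ) (hf : MemPS p Ω μfam f) (hf0 : ∃ z ∈ Ω, f z ≠ 0) :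
    (∃ I h g : ℂ → ℂ,
      OmegaInner Ω ψ I ∧
      MemPS 2 Ω μfam h ∧ (∀ z ∈ Ω, h z ≠ 0) ∧
      DifferentiableOn ℂ g Ω ∧
      (∀ z ∈ Ω, h z = Complex.exp (((p:ℂ)/2) * g z)) ∧
      (∀ z ∈ Ω, f z = I z * Complex.exp (g z))) ∧
    (p = 1 → ∃ g h : ℂ → ℂ,
      MemPS 2 Ω μfam g ∧ MemPS 2 Ω μfam h ∧ ∀ z ∈ Ω, f z = g z * h z) := 
  stmt12_general Ω u hu ν hν (fun _ _ _ => (measure_mono (subset_univ _)).trans_lt hfin) μfam hμ ψ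
    hψ p (zero_lt_one.trans_le hp) f hf hf0

end
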